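/- arXiv:2602.21118 — 4 statements merged into one kernel-verified Lean document; each statement's English description precedes it below -/
import Mathlib

section
/- Let E ⊆ ℝ^N be a measurable set with finite Lebesgue measure. Then there exists a constant C = C(N) > 0 such that for every φ ∈ C_c^∞(ℝ^N) and every ε > 0 one has ∫_E |φ|^N dx ≤ (C/ε) |E| ∫_{ℝ^N} |∇φ|^N dx + C ε ∫_{ℝ^N} |φ|^N dx. -/
open MeasureTheory Filter Topology Metric Set ENNReal
open scoped RealInnerProductSpace

noncomputable section

/-- Euclidean space `ℝ^N`. -/
abbrev EucN (N : ℕ) := EuclideanSpace ℝ (Fin N)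

/-- A test function on an open set `Ω ⊆ ℝ^N`: smooth, with compact support contained in `Ω`. -/
def IsTestFun {N : ℕ} (Ω : Set (EucN N)) (φ : EucN N → ℝ) : Prop :=
  ContDiff ℝ (⊤ : ℕ∞) φ ∧ HasCompactSupport φ ∧ tsupport φ ⊆ Ω

/-- Pairs `(u, g)` in `L^q × L^q`, thought of as a function together with its (weak) gradient. -/
abbrev SobPair (N : ℕ) (q : ℝ≥0∞) :=
  Lp ℝ q (volume : Measure (EucN N)) × Lp (EucN N) q (volume : Measure (EucN N))

/-- A pair given (a.e.) by a test function and its gradient. -/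
def IsTestPair {N : ℕ} (q : ℝ≥0∞) (Ω : Set (EucN N)) (w : SobPair N q) : Prop :=
  ∃ ψ : EucN N → ℝ, IsTestFun Ω ψ ∧ (⇑w.1 =ᵐ[volume] ψ) ∧
    (⇑w.2 =ᵐ[volume] fun x => gradient ψ x)

theorem fact_one_le_ofReal {p : ℝ} (hp : 1 ≤ p) : Fact (1 ≤ ENNReal.ofReal p) :=
  ⟨ENNReal.one_le_ofReal.mpr hp⟩

/-- The Sobolev space `W^{1,p}_0(Ω)`, realized as the closure in `L^p × L^p` of the set of
pairs (test function, its gradient). -/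
def W10 (N : ℕ) (p : ℝ) (hp : 1 ≤ p) (Ω : Set (EucN N)) :
    Set (SobPair N (ENNReal.ofReal p)) :=
  letI := fact_one_le_ofReal hp
  closure {w | IsTestPair (ENNReal.ofReal p) Ω w}

/-- The first eigenvalue `λ_{1,p}(Ω)` (as an extended real, `∞` if there are no admissible
functions). -/
def lambda1p (N : ℕ) (p : ℝ) (hp : 1 ≤ p) (Ω : Set (EucN N)) : ℝ≥0∞ :=
  sInf {t | ∃ w ∈ W10 N p hp Ω, (∫ x, |w.1 x| ^ p) = 1 ∧
    t = ENNReal.ofReal (∫ x, ‖w.2 x‖ ^ p)}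

/-- The `L^p` Poincaré constant "at infinity" `E_p(Ω)`. -/
def Einfty (N : ℕ) (p : ℝ) (hp : 1 ≤ p) (Ω : Set (EucN N)) : ℝ≥0∞ :=
  ⨆ R ∈ Set.Ioi (0 : ℝ), lambda1p N p hp (Ω \ closure (ball (0 : EucN N) R))

/-- There is a continuous odd map from `A` to the unit sphere `S^{j-1} ⊆ ℝ^j`. -/
def HasOddMapToSphere {Z : Type*} [NormedAddCommGroup Z] (A : Set Z) (j : ℕ) : Prop :=
  ∃ f : Z → EuclideanSpace ℝ (Fin j),
    ContinuousOn f A ∧ (∀ x ∈ A, ‖f x‖ = 1) ∧ ∀ x ∈ A, f (-x) = -f x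

/-- The Krasnosel'skii genus of `A` is at least `k`. -/
def genusGE {Z : Type*} [NormedAddCommGroup Z] (A : Set Z) (k : ℕ) : Prop :=
  ∀ j : ℕ, HasOddMapToSphere A j → k ≤ j

/-- The Krasnosel'skii genus of `A`, valued in `ℕ∞`. -/
def genus {Z : Type*} [NormedAddCommGroup Z] (A : Set Z) : ℕ∞ :=
  sInf {k : ℕ∞ | ∃ j : ℕ, (j : ℕ∞) = k ∧ HasOddMapToSphere A j}

/-- The class `𝒲_{k,p}(Ω)` of compact symmetric subsets of `S_p(Ω) ∩ W^{1,p}_0(Ω)` with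
genus at least `k`. -/
def SobClass (N : ℕ) (p : ℝ) (hp : 1 ≤ p) (Ω : Set (EucN N)) (k : ℕ) :
    Set (Set (SobPair N (ENNReal.ofReal p))) :=
  letI := fact_one_le_ofReal hp
  {K | K ⊆ W10 N p hp Ω ∧ (∀ w ∈ K, (∫ x, |w.1 x| ^ p) = 1) ∧
       (∀ w ∈ K, -w ∈ K) ∧ IsCompact K ∧ genusGE K k}

/-- The `k`-th minmax Ljusternik–Schnirelmann value `λ_{k,p}^{LS}(Ω)`. -/
def lambdaLS (N : ℕ) (p : ℝ) (hp : 1 ≤ p) (Ω : Set (EucN N)) (k : ℕ) : ℝ≥0∞ :=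
  ⨅ K ∈ SobClass N p hp Ω k, ⨆ w ∈ K, ENNReal.ofReal (∫ x, ‖w.2 x‖ ^ p)

/-- `w = (u, ∇u)` is an eigenfunction of the Dirichlet `p`-Laplacian on `Ω` associated to the
eigenvalue `lam`. -/
def IsEigenfunction (N : ℕ) (p : ℝ) (hp : 1 ≤ p) (Ω : Set (EucN N)) (lam : ℝ)
    (w : SobPair N (ENNReal.ofReal p)) : Prop :=
  w ∈ W10 N p hp Ω ∧ w ≠ 0 ∧
  ∀ φ : EucN N → ℝ, IsTestFun Ω φ →
    (∫ x, ‖w.2 x‖ ^ (p - 2) * ⟪w.2 x, gradient φ x⟫) =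
      lam * ∫ x, |w.1 x| ^ (p - 2) * (w.1 x) * φ x

/-- `lam` is an eigenvalue of the Dirichlet `p`-Laplacian on `Ω`. -/
def IsEigenvalue (N : ℕ) (p : ℝ) (hp : 1 ≤ p) (Ω : Set (EucN N)) (lam : ℝ) : Prop :=
  ∃ w, IsEigenfunction N p hp Ω lam w

/-- `v = (v, ∇v)` is a non-negative weak subsolution of `-Δ_p u = lam · u^{p-1}` in `Ω`. -/
def IsSubsolution (N : ℕ) (p : ℝ) (hp : 1 ≤ p) (Ω : Set (EucN N)) (lam : ℝ)
    (v : SobPair N (ENNReal.ofReal p)) : Prop :=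
  v ∈ W10 N p hp Ω ∧ (∀ᵐ x, 0 ≤ v.1 x) ∧
  ∀ φ ∈ W10 N p hp Ω, (∀ᵐ x, 0 ≤ φ.1 x) →
    (∫ x, ‖v.2 x‖ ^ (p - 2) * ⟪v.2 x, φ.2 x⟫) ≤ lam * ∫ x, (v.1 x) ^ (p - 1) * φ.1 x

/-- A strongly confining potential. -/
def StronglyConfining (N : ℕ) (V : EucN N → ℝ) : Prop :=
  LocallyIntegrable V volume ∧ (∀ᵐ x, 0 ≤ V x) ∧
  ∃ α : ℝ → ℝ, (∀ R > (0 : ℝ), 0 < α R) ∧ MonotoneOn α (Set.Ioi 0) ∧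
    Tendsto α atTop atTop ∧
    ∀ R > (0 : ℝ), ∀ᵐ x, x ∉ ball (0 : EucN N) R → α R ≤ V x

/-- Triples `(u, g, h)` in `L^q × L^q × L^q`; `h` plays the role of `V^{1/p} u` in the weighted
Sobolev space. -/
abbrev SobTriple (N : ℕ) (q : ℝ≥0∞) :=
  Lp ℝ q (volume : Measure (EucN N)) × Lp (EucN N) q (volume : Measure (EucN N)) ×
    Lp ℝ q (volume : Measure (EucN N))

/-- A triple given (a.e.) by a test function, its gradient, and `V^{1/p}` times it. -/
def IsTestTriple {N : ℕ} (q : ℝ≥0∞) (p : ℝ) (Ω : Set (EucN N)) (V : EucN N → ℝ)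
    (w : SobTriple N q) : Prop :=
  ∃ ψ : EucN N → ℝ, IsTestFun Ω ψ ∧ (⇑w.1 =ᵐ[volume] ψ) ∧
    (⇑w.2.1 =ᵐ[volume] fun x => gradient ψ x) ∧
    (⇑w.2.2 =ᵐ[volume] fun x => (V x) ^ (1/p) * ψ x)

/-- The weighted Sobolev space `W^{1,p}_0(Ω; V)`, realized as a closure of triples coming from
test functions; the norm topology of `L^p × L^p × L^p` on such triples corresponds exactly to
the weighted Sobolev norm `(∫|∇u|^p + ∫(1+V)|u|^p)^{1/p}`. -/
def W10V (N : ℕ) (p : ℝ) (hp : 1 ≤ p) (Ω : Set (EucN N)) (V : EucN N → ℝ) :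
    Set (SobTriple N (ENNReal.ofReal p)) :=
  letI := fact_one_le_ofReal hp
  closure {w | IsTestTriple (ENNReal.ofReal p) p Ω V w}

/-- The class `𝒲_{k,p}(Ω; V)` for the weighted space. -/
def SobClassV (N : ℕ) (p : ℝ) (hp : 1 ≤ p) (Ω : Set (EucN N)) (V : EucN N → ℝ) (k : ℕ) :
    Set (Set (SobTriple N (ENNReal.ofReal p))) :=
  letI := fact_one_le_ofReal hp
  {K | K ⊆ W10V N p hp Ω V ∧ (∀ w ∈ K, (∫ x, |w.1 x| ^ p) = 1) ∧
       (∀ w ∈ K, -w ∈ K) ∧ IsCompact K ∧ genusGE K k}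

/-- The perturbed minmax value `λ_{k,p}^{LS}(Ω; ε V)`, for the functional
`G(φ) = ∫|∇φ|^p + ε ∫ V |φ|^p`. -/
def lambdaLSV (N : ℕ) (p : ℝ) (hp : 1 ≤ p) (Ω : Set (EucN N)) (V : EucN N → ℝ)
    (ε : ℝ) (k : ℕ) : ℝ≥0∞ :=
  ⨅ K ∈ SobClassV N p hp Ω V k, ⨆ w ∈ K,
    ENNReal.ofReal ((∫ x, ‖w.2.1 x‖ ^ p) + ε * ∫ x, |w.2.2 x| ^ p)

/-- `w` is a constrained critical point, at level `lam`, of the perturbed functional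
`G(φ) = ∫|∇φ|^p + ε ∫ V |φ|^p` on the unit sphere of `L^p`. -/
def IsCriticalV (N : ℕ) (p : ℝ) (hp : 1 ≤ p) (Ω : Set (EucN N)) (V : EucN N → ℝ)
    (ε : ℝ) (lam : ℝ) (w : SobTriple N (ENNReal.ofReal p)) : Prop :=
  w ∈ W10V N p hp Ω V ∧ (∫ x, |w.1 x| ^ p) = 1 ∧
  ∀ φ : EucN N → ℝ, IsTestFun Ω φ →
    (∫ x, ‖w.2.1 x‖ ^ (p - 2) * ⟪w.2.1 x, gradient φ x⟫)
      + ε * ∫ x, V x * |w.1 x| ^ (p - 2) * (w.1 x) * φ x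
    = lam * ∫ x, |w.1 x| ^ (p - 2) * (w.1 x) * φ x

/-- The embedding `W^{1,p}_0(Ω) ↪ L^p(Ω)` is compact: every bounded sequence in `W^{1,p}_0(Ω)`
has a subsequence converging strongly in `L^p`. -/
def CompactSobolevEmbedding (N : ℕ) (p : ℝ) (hp : 1 ≤ p) (Ω : Set (EucN N)) : Prop :=
  ∀ w : ℕ → SobPair N (ENNReal.ofReal p), (∀ n, w n ∈ W10 N p hp Ω) →
    (∃ M : ℝ≥0∞, M ≠ ⊤ ∧ ∀ n, eLpNorm (⇑(w n).1) (ENNReal.ofReal p) volume ≤ M ∧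
        eLpNorm (⇑(w n).2) (ENNReal.ofReal p) volume ≤ M) →
    ∃ σ : ℕ → ℕ, StrictMono σ ∧ ∃ u : EucN N → ℝ, MemLp u (ENNReal.ofReal p) volume ∧
      Tendsto (fun n => eLpNorm (⇑(w (σ n)).1 - u) (ENNReal.ofReal p) volume) atTop (𝓝 0)


/-!
The argument is by way of the Ladyzhenskaya-type inequality
`∫ |φ|^(2n) ≤ K (∫ |∇φ|^n) (∫ |φ|^n)`, `n` being the dimension. It comes from the
Gagliardo–Nirenberg–Sobolev inequality `‖u‖_{n/(n-1)} ≤ c ‖∇u‖_1` for `u = |φ|^(2(n-1))`: Hölder's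
inequality splits the integrand `|φ|^(2n-3) |∇φ|` of the right-hand side into the three factors
`|∇φ|`, `|φ|` and `|φ|^(2(n-2))`, and the power of `∫ |φ|^(2n)` produced by the last one is
absorbed on the left. The Cauchy–Schwarz inequality on `E` then gives
`(∫_E |φ|^n)² ≤ K |E| (∫ |∇φ|^n) (∫ |φ|^n)`, and `√(a b) ≤ a / ε + ε b`, for
`a = |E| ∫ |∇φ|^n` and `b = ∫ |φ|^n`, separates the two factors.
-/

open Module

theorem le_div_mul_add_mul_mul_of_sq_le {x a b c ε : ℝ} (ha : 0 ≤ a) (hb : 0 ≤ b) (hc : 0 ≤ c)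
    (hε : 0 < ε) (h : x ^ 2 ≤ c * a * b) : x ≤ √c / ε * a + √c * ε * b := by
  have amgm : a * b ≤ (a / ε + ε * b) ^ 2 := by
    have hab : a * b = a / ε * (ε * b) := by field_simp
    have : 0 ≤ a / ε := by positivity
    have : 0 ≤ ε * b := by positivity
    nlinarith
  refine le_of_sq_le_sq ?_ (by positivity)
  calc x ^ 2 ≤ c * (a * b) := by rwa [← mul_assoc]
    _ ≤ c * (a / ε + ε * b) ^ 2 := by gcongr
    _ = (√c * (a / ε + ε * b)) ^ 2 := by rw [mul_pow, Real.sq_sqrt hc]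
    _ = (√c / ε * a + √c * ε * b) ^ 2 := by ring

section Integration

variable {α : Type*} [MeasurableSpace α] {μ : Measure α}

theorem lintegral_mul_mul_pow_pow_le {f g h : α → ℝ≥0∞} (hf : AEMeasurable f μ)
    (hg : AEMeasurable g μ) (hh : AEMeasurable h μ) (m : ℕ) :
    (∫⁻ x, f x * g x * h x ^ m ∂μ) ^ (m + 2) ≤
      (∫⁻ x, f x ^ (m + 2) ∂μ) * (∫⁻ x, g x ^ (m + 2) ∂μ) * (∫⁻ x, h x ^ (m + 2) ∂μ) ^ m := by
  set θ : ℝ := ((m + 2 : ℕ) : ℝ)⁻¹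
  have hθ : 0 ≤ θ := by positivity
  have pow_rpow (a : ℝ≥0∞) : (a ^ (m + 2)) ^ θ = a := ENNReal.pow_rpow_inv_natCast (by simp) a
  have rpow_pow (a : ℝ≥0∞) : (a ^ θ) ^ (m + 2) = a := ENNReal.rpow_inv_natCast_pow (by simp) a
  have rpow_mul (a : ℝ≥0∞) : a ^ (m * θ) = (a ^ θ) ^ m := by
    rw [mul_comm, ENNReal.rpow_mul, ENNReal.rpow_natCast]
  have holder := ENNReal.lintegral_prod_norm_pow_le (μ := μ) Finset.univ
    (f := ![fun x => f x ^ (m + 2), fun x => g x ^ (m + 2), fun x => h x ^ (m + 2)])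
    (p := ![θ, θ, m * θ])
    (by simpa [Fin.forall_fin_succ] using ⟨hf.pow_const _, hg.pow_const _, hh.pow_const _⟩)
    (by simp only [Fin.sum_univ_three, Matrix.cons_val, θ]; push_cast; field_simp; ring)
    (by simp [Fin.forall_fin_succ, hθ, mul_nonneg])
  simp only [Fin.prod_univ_three, Matrix.cons_val, rpow_mul, pow_rpow] at holder
  calc (∫⁻ x, f x * g x * h x ^ m ∂μ) ^ (m + 2)
      ≤ _ := pow_le_pow_left₀ zero_le holder _
    _ = _ := by simp only [mul_pow, rpow_pow, pow_right_comm _ m]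

theorem sq_setLIntegral_le {f : α → ℝ≥0∞} (hf : AEMeasurable f μ) (s : Set α) :
    (∫⁻ x in s, f x ∂μ) ^ 2 ≤ μ s * ∫⁻ x, f x ^ 2 ∂μ := by
  calc (∫⁻ x in s, f x ∂μ) ^ 2
      ≤ (∫⁻ x in s, f x ^ 2 ∂μ) * μ s := by
        simpa using lintegral_mul_mul_pow_pow_le hf.restrict
          (aemeasurable_const (b := 1)) (aemeasurable_const (b := 1)) 0
    _ ≤ μ s * ∫⁻ x, f x ^ 2 ∂μ := by
        rw [mul_comm]
        gcongr
        exact Measure.restrict_le_self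

theorem integral_norm_pow_eq_toReal_lintegral_enorm_pow {F : Type*} [NormedAddCommGroup F]
    {f : α → F} (hf : AEStronglyMeasurable f μ) (n : ℕ) :
    ∫ x, ‖f x‖ ^ n ∂μ = (∫⁻ x, ‖f x‖ₑ ^ n ∂μ).toReal := by
  simpa using integral_norm_eq_lintegral_enorm (hf.norm.pow n)

end Integration

theorem lintegral_enorm_pow_lt_top_of_hasCompactSupport {X F : Type*}
    [TopologicalSpace X] [MeasurableSpace X] [OpensMeasurableSpace X] {μ : Measure X}
    [IsFiniteMeasureOnCompacts μ] [NormedAddCommGroup F] {f : X → F} (hf : Continuous f)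
    (hsupp : HasCompactSupport f) {n : ℕ} (hn : n ≠ 0) : ∫⁻ x, ‖f x‖ₑ ^ n ∂μ < ∞ := by
  have := (hf.norm.pow n).integrable_of_hasCompactSupport (μ := μ)
    (hsupp.comp_left (g := fun y => ‖y‖ ^ n) (by simp [hn])) |>.hasFiniteIntegral
  simpa [HasFiniteIntegral] using this

section Sobolev

variable {V F : Type*} [NormedAddCommGroup V] [NormedSpace ℝ V] [FiniteDimensional ℝ V]
  [MeasurableSpace V] [BorelSpace V] (μ : Measure V) [μ.IsAddHaarMeasure]
  [NormedAddCommGroup F] [InnerProductSpace ℝ F]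

theorem lintegral_enorm_rpow_mul_le_lintegral_rpow_mul_fderiv {u : V → F} (hu : ContDiff ℝ 1 u)
    (hsupp : HasCompactSupport u) {p : ℝ} (hp : (finrank ℝ V : ℝ).HolderConjugate p)
    {γ : NNReal} (hγ : 1 < γ) :
    ∫⁻ x, ‖u x‖ₑ ^ (γ * p) ∂μ ≤ lintegralPowLePowLIntegralFDerivConst μ p *
      (γ * ∫⁻ x, ‖u x‖ₑ ^ (γ - 1 : ℝ) * ‖fderiv ℝ u x‖ₑ ∂μ) ^ p := by
  have hγ₀ : γ ≠ 0 := (zero_lt_one.trans hγ).ne'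
  have gns := lintegral_pow_le_pow_lintegral_fderiv μ (hu.norm_rpow (p := γ) (mod_cast hγ))
    (hsupp.comp_left (g := fun y => ‖y‖ ^ (γ : ℝ)) (by simp [hγ₀])) hp
  have enorm_rpow (x : V) : ‖‖u x‖ ^ (γ : ℝ)‖ₑ = ‖u x‖ₑ ^ (γ : ℝ) := by
    rw [Real.enorm_rpow_of_nonneg (norm_nonneg _) γ.coe_nonneg, enorm_norm]
  simp only [enorm_rpow, ← ENNReal.rpow_mul] at gns
  refine gns.trans ?_
  rw [← lintegral_const_mul' _ _ ENNReal.coe_ne_top]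
  gcongr with x
  · exact hp.symm.nonneg
  · rw [← mul_assoc]
    exact enorm_fderiv_norm_rpow_le (hu.differentiable one_ne_zero) hγ

variable (F) in
theorem exists_lintegral_enorm_pow_pow_le_lintegral_fderiv_mul_pow {m : ℕ}
    (hm : finrank ℝ V = m + 2) :
    ∃ K : NNReal, ∀ u : V → F, ContDiff ℝ 1 u → HasCompactSupport u →
      (∫⁻ x, ‖u x‖ₑ ^ (2 * (m + 2)) ∂μ) ^ (m + 1) ≤
        K * (∫⁻ x, ‖fderiv ℝ u x‖ₑ * ‖u x‖ₑ * (‖u x‖ₑ ^ 2) ^ m ∂μ) ^ (m + 2) := by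
  set p : ℝ := (m + 2) / (m + 1)
  have hp : (finrank ℝ V : ℝ).HolderConjugate p := by
    rw [Real.holderConjugate_iff, hm]
    push_cast
    exact ⟨by linarith [m.cast_nonneg (α := ℝ)], by simp only [p]; field_simp; ring⟩
  set γ : NNReal := 2 * (m + 1)
  set c := lintegralPowLePowLIntegralFDerivConst μ p
  refine ⟨c ^ (m + 1) * γ ^ (m + 2), fun u hu hsupp => ?_⟩
  have gns := lintegral_enorm_rpow_mul_le_lintegral_rpow_mul_fderiv μ hu hsupp hp
    (γ := γ) (by simp only [γ]; norm_cast; omega)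
  have exponent_left : γ * p = (2 * (m + 2) : ℕ) := by
    simp only [γ, p]
    push_cast
    field_simp
  have exponent_right : (γ - 1 : ℝ) = (2 * m + 1 : ℕ) := by
    simp only [γ]
    push_cast
    ring
  have p_mul : p * (m + 1 : ℕ) = (m + 2 : ℕ) := by
    simp only [p]
    push_cast
    field_simp
  have integrand (x : V) : ‖u x‖ₑ ^ (2 * m + 1) * ‖fderiv ℝ u x‖ₑ =
      ‖fderiv ℝ u x‖ₑ * ‖u x‖ₑ * (‖u x‖ₑ ^ 2) ^ m := by ring
  simp only [exponent_left, exponent_right, ENNReal.rpow_natCast, integrand] at gns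
  refine (pow_le_pow_left₀ zero_le gns (m + 1)).trans_eq ?_
  rw [mul_pow, ← ENNReal.rpow_mul_natCast, p_mul, ENNReal.rpow_natCast, mul_pow, ← mul_assoc]
  push_cast
  rfl

variable (F) in
theorem exists_lintegral_enorm_pow_two_mul_le_lintegral_fderiv_mul (hV : 1 < finrank ℝ V) :
    ∃ K : NNReal, 0 < K ∧ ∀ u : V → F, ContDiff ℝ 1 u → HasCompactSupport u →
      ∫⁻ x, ‖u x‖ₑ ^ (2 * finrank ℝ V) ∂μ ≤
        K * (∫⁻ x, ‖fderiv ℝ u x‖ₑ ^ finrank ℝ V ∂μ) * ∫⁻ x, ‖u x‖ₑ ^ finrank ℝ V ∂μ := by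
  obtain ⟨m, hm⟩ : ∃ m, finrank ℝ V = m + 2 := Nat.exists_eq_add_of_le' hV
  obtain ⟨K, hK⟩ := exists_lintegral_enorm_pow_pow_le_lintegral_fderiv_mul_pow F μ hm
  refine ⟨K + 1, by positivity, fun u hu hsupp => ?_⟩
  rw [hm]
  have hu_meas : AEMeasurable (fun x => ‖u x‖ₑ) μ := hu.continuous.enorm.measurable.aemeasurable
  have hfderiv_meas : AEMeasurable (fun x => ‖fderiv ℝ u x‖ₑ) μ :=
    (hu.continuous_fderiv one_ne_zero).enorm.measurable.aemeasurable
  have holder := lintegral_mul_mul_pow_pow_le hfderiv_meas hu_meas (hu_meas.pow_const 2) m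
  simp only [← pow_mul] at holder
  set B := ∫⁻ x, ‖u x‖ₑ ^ (2 * (m + 2)) ∂μ
  set G := ∫⁻ x, ‖fderiv ℝ u x‖ₑ ^ (m + 2) ∂μ
  set A := ∫⁻ x, ‖u x‖ₑ ^ (m + 2) ∂μ
  have absorb : B * B ^ m ≤ K * G * A * B ^ m := by
    calc B * B ^ m = B ^ (m + 1) := (pow_succ' B m).symm
      _ ≤ _ := hK u hu hsupp
      _ ≤ K * (G * A * B ^ m) := by simp only [← pow_mul]; gcongr
      _ = K * G * A * B ^ m := by ring
  rcases eq_or_ne B 0 with hB₀ | hB₀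
  · simp [hB₀]
  · have hB_top : B ≠ ∞ :=
      (lintegral_enorm_pow_lt_top_of_hasCompactSupport hu.continuous hsupp (by simp)).ne
    calc B ≤ K * G * A := by
          rwa [ENNReal.mul_le_mul_iff_left (pow_ne_zero m hB₀) (by finiteness)] at absorb
      _ ≤ (K + 1 : NNReal) * G * A := by gcongr; exact le_self_add

variable (F) in
theorem exists_sq_setIntegral_norm_pow_le_integral_fderiv_mul (hV : 1 < finrank ℝ V) :
    ∃ K > (0 : ℝ), ∀ E : Set V, μ E < ∞ →
      ∀ u : V → F, ContDiff ℝ 1 u → HasCompactSupport u →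
        (∫ x in E, ‖u x‖ ^ finrank ℝ V ∂μ) ^ 2 ≤
          K * (μ.real E * ∫ x, ‖fderiv ℝ u x‖ ^ finrank ℝ V ∂μ) *
            ∫ x, ‖u x‖ ^ finrank ℝ V ∂μ := by
  obtain ⟨K, hK₀, hK⟩ := exists_lintegral_enorm_pow_two_mul_le_lintegral_fderiv_mul F μ hV
  refine ⟨K, hK₀, fun E hE u hu hsupp => ?_⟩
  have hn : finrank ℝ V ≠ 0 := by omega
  have hu_cont := hu.continuous
  have hfderiv_cont := hu.continuous_fderiv one_ne_zero
  have hA := lintegral_enorm_pow_lt_top_of_hasCompactSupport (μ := μ) hu_cont hsupp hn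
  have hG := lintegral_enorm_pow_lt_top_of_hasCompactSupport (μ := μ) hfderiv_cont
    (hsupp.fderiv ℝ) hn
  have key : (∫⁻ x in E, ‖u x‖ₑ ^ finrank ℝ V ∂μ) ^ 2 ≤
      K * (μ E * ∫⁻ x, ‖fderiv ℝ u x‖ₑ ^ finrank ℝ V ∂μ) * ∫⁻ x, ‖u x‖ₑ ^ finrank ℝ V ∂μ := by
    calc (∫⁻ x in E, ‖u x‖ₑ ^ finrank ℝ V ∂μ) ^ 2
        ≤ μ E * ∫⁻ x, ‖u x‖ₑ ^ (2 * finrank ℝ V) ∂μ := by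
          simp only [mul_comm 2, pow_mul]
          exact sq_setLIntegral_le (hu_cont.enorm.measurable.pow_const _).aemeasurable E
      _ ≤ μ E * (K * (∫⁻ x, ‖fderiv ℝ u x‖ₑ ^ finrank ℝ V ∂μ) *
            ∫⁻ x, ‖u x‖ₑ ^ finrank ℝ V ∂μ) := by grw [hK u hu hsupp]
      _ = _ := by ring
  rw [integral_norm_pow_eq_toReal_lintegral_enorm_pow hu_cont.aestronglyMeasurable,
    integral_norm_pow_eq_toReal_lintegral_enorm_pow hu_cont.aestronglyMeasurable,
    integral_norm_pow_eq_toReal_lintegral_enorm_pow hfderiv_cont.aestronglyMeasurable]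
  simpa [Measure.real] using ENNReal.toReal_mono (by finiteness) key

variable (F) in
theorem statement3_general (hV : 1 < finrank ℝ V) :
    ∃ C > (0 : ℝ), ∀ E : Set V, μ E < ∞ →
      ∀ φ : V → F, ContDiff ℝ 1 φ → HasCompactSupport φ → ∀ ε > (0 : ℝ),
        ∫ x in E, ‖φ x‖ ^ finrank ℝ V ∂μ ≤
          C / ε * (μ.real E * ∫ x, ‖fderiv ℝ φ x‖ ^ finrank ℝ V ∂μ) +
            C * ε * ∫ x, ‖φ x‖ ^ finrank ℝ V ∂μ := by
  obtain ⟨K, hK₀, hK⟩ := exists_sq_setIntegral_norm_pow_le_integral_fderiv_mul F μ hV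
  refine ⟨√K, Real.sqrt_pos.2 hK₀, fun E hE φ hφ hsupp ε hε => ?_⟩
  exact le_div_mul_add_mul_mul_of_sq_le (by positivity) (by positivity) hK₀.le hε
    (hK E hE φ hφ hsupp)

end Sobolev

theorem statement3 (N : ℕ) (hN : 1 < N) :
    ∃ C > (0 : ℝ), ∀ E : Set (EucN N), MeasurableSet E → volume E < ⊤ →
      ∀ φ : EucN N → ℝ, ContDiff ℝ (⊤ : ℕ∞) φ → HasCompactSupport φ →
        ∀ ε > (0 : ℝ),
          (∫ x in E, |φ x| ^ (N : ℝ)) ≤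
            (C / ε) * (volume E).toReal * (∫ x, ‖gradient φ x‖ ^ (N : ℝ))
              + C * ε * ∫ x, |φ x| ^ (N : ℝ) := by
  obtain ⟨C, hC, h⟩ := statement3_general ℝ (volume : Measure (EucN N)) (by simpa using hN)
  exact ⟨C, hC, fun E _ hE φ hφ hsupp ε hε => by
    simpa [gradient, mul_assoc, Measure.real] using h E hE φ (hφ.of_le (by simp)) hsupp ε hε⟩

end
end

section
/- Let p > N and let E ⊆ ℝ^N be a measurable set with finite Lebesgue measure. Then there exists a constant C = C(N,p) > 0 such that for every φ ∈ C_c^∞(ℝ^N) and every ε > 0 one has ∫_E |φ|^p dx ≤ (C/ε^{(p−N)/N}) |E|^{p/N} ∫_{ℝ^N} |∇φ|^p dx + C ε ∫_{ℝ^N} |φ|^p dx. -/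
/-!
For a `C¹` function `f` on an `n`-dimensional space and `p > n`, integrating `∇f` along the rays
issuing from `x` and averaging over their directions bounds `|f x|` by the mean of `|f|` over
`B(x, r)` plus `∫₀ʳ` of the means of `|∇f|` over `B(x, s)`. By Hölder's inequality a mean over
`B(x, s)` costs a factor `s ^ (-n / p)`, which is integrable at `0` exactly because `p > n`. Hence
`|f x| ^ p ≤ C (r ^ (-n) ‖f‖_p ^ p + r ^ (p - n) ‖∇f‖_p ^ p)` for every `r > 0` (Morrey's
inequality). Integrating this over `E` and choosing `r` with `r ^ n = |E| / ε` gives the claim.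
-/

open MeasureTheory Filter Topology Metric Set ENNReal
open scoped RealInnerProductSpace

noncomputable section

theorem laverage_enorm_le_rpow_mul_eLpNorm' {α F : Type*} [MeasurableSpace α]
    [NormedAddCommGroup F] {ν : Measure α} [IsFiniteMeasure ν] [NeZero ν] {f : α → F}
    (hf : AEStronglyMeasurable f ν) {p : ℝ} (hp : 1 ≤ p) :
    ⨍⁻ x, ‖f x‖ₑ ∂ν ≤ ν univ ^ (-(1 / p)) * eLpNorm' f p ν := by
  calc ⨍⁻ x, ‖f x‖ₑ ∂ν = eLpNorm' f 1 ((ν univ)⁻¹ • ν) := by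
        simp [laverage_eq', eLpNorm'_eq_lintegral_enorm]
    _ ≤ eLpNorm' f p ((ν univ)⁻¹ • ν) :=
        eLpNorm'_le_eLpNorm'_of_exponent_le one_pos hp _ (hf.smul_measure _)
    _ = ν univ ^ (-(1 / p)) * eLpNorm' f p ν := by
        rw [eLpNorm'_smul_measure (by positivity), ENNReal.inv_rpow, ← ENNReal.rpow_neg]

theorem lintegral_enorm_rpow_eq_ofReal_integral {α F : Type*} [MeasurableSpace α]
    [NormedAddCommGroup F] {ν : Measure α} {f : α → F} {p : ℝ} (hp : 0 ≤ p)
    (hf : Integrable (fun x ↦ ‖f x‖ ^ p) ν) :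
    ∫⁻ x, ‖f x‖ₑ ^ p ∂ν = ENNReal.ofReal (∫ x, ‖f x‖ ^ p ∂ν) := by
  rw [ofReal_integral_eq_lintegral_ofReal hf (ae_of_all _ fun x ↦ by positivity)]
  simp only [← ofReal_norm, ENNReal.ofReal_rpow_of_nonneg (norm_nonneg _) hp]

theorem integrable_norm_rpow_of_hasCompactSupport {X F : Type*} [TopologicalSpace X]
    [MeasurableSpace X] [OpensMeasurableSpace X] [NormedAddCommGroup F] {ν : Measure X}
    [IsFiniteMeasureOnCompacts ν] {f : X → F} (hf : Continuous f) (hfc : HasCompactSupport f)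
    {p : ℝ} (hp : 0 < p) : Integrable (fun x ↦ ‖f x‖ ^ p) ν :=
  (hf.norm.rpow_const fun _ ↦ Or.inr hp.le).integrable_of_hasCompactSupport <|
    hfc.comp_left (g := fun y ↦ ‖y‖ ^ p) (by simp [Real.zero_rpow hp.ne'])

theorem norm_gradient_eq_norm_fderiv {H : Type*} [NormedAddCommGroup H] [InnerProductSpace ℝ H]
    [CompleteSpace H] (f : H → ℝ) (x : H) : ‖gradient f x‖ = ‖fderiv ℝ f x‖ := by
  rw [gradient, LinearIsometryEquiv.norm_map]

theorem lintegral_Ioc_ofReal_rpow_neg {a r : ℝ} (ha : a < 1) (hr : 0 ≤ r) :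
    ∫⁻ s in Ioc 0 r, ENNReal.ofReal (s ^ (-a)) = ENNReal.ofReal (r ^ (1 - a) / (1 - a)) := by
  have rpow_integrable : IntegrableOn (fun s : ℝ ↦ s ^ (-a)) (Ioc 0 r) :=
    (intervalIntegrable_iff_integrableOn_Ioc_of_le hr).1
      (intervalIntegral.intervalIntegrable_rpow' (by linarith))
  rw [← ofReal_integral_eq_lintegral_ofReal rpow_integrable,
    ← intervalIntegral.integral_of_le hr, integral_rpow (Or.inl (by linarith)),
    Real.zero_rpow (by linarith), sub_zero, neg_add_eq_sub]
  filter_upwards [ae_restrict_mem measurableSet_Ioc] with s hs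
  exact Real.rpow_nonneg hs.1.le _

theorem exists_pos_mul_rpow_neg_eq_and_mul_rpow_sub_eq {d m ε : ℝ} (hd : d ≠ 0) (hm : 0 < m)
    (hε : 0 < ε) (p : ℝ) :
    ∃ r > 0, m * r ^ (-d) = ε ∧ m * r ^ (p - d) = m ^ (p / d) / ε ^ ((p - d) / d) := by
  refine ⟨(m / ε) ^ (1 / d), by positivity, ?_, ?_⟩
  · rw [← Real.rpow_mul (by positivity), mul_neg, one_div_mul_cancel hd, Real.rpow_neg_one]
    field_simp
  · rw [← Real.rpow_mul (by positivity), one_div_mul_eq_div, Real.div_rpow hm.le hε.le,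
      ← mul_div_assoc, sub_div, div_self hd, Real.rpow_sub_one hm.ne', mul_div_cancel₀ _ hm.ne']

theorem enorm_le_enorm_add_lintegral_fderiv {V F : Type*} [NormedAddCommGroup V]
    [NormedSpace ℝ V] [NormedAddCommGroup F] [NormedSpace ℝ F] {f : V → F}
    (hf : ContDiff ℝ 1 f) (x : V) {y : V} (hy : ‖y‖ ≤ 1) {r : ℝ} (hr : 0 ≤ r) :
    ‖f x‖ₑ ≤ ‖f (x + r • y)‖ₑ + ∫⁻ s in Ioc 0 r, ‖fderiv ℝ f (x + s • y)‖ₑ := by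
  set ray : ℝ → F := fun s ↦ f (x + s • y)
  have ray_contDiff : ContDiff ℝ 1 ray := by fun_prop
  have enorm_deriv_ray_le (s : ℝ) : ‖deriv ray s‖ₑ ≤ ‖fderiv ℝ f (x + s • y)‖ₑ := by
    have line_hasDerivAt : HasDerivAt (fun s : ℝ ↦ x + s • y) y s := by
      simpa using ((hasDerivAt_id s).smul_const y).const_add x
    have ray_hasDerivAt : HasDerivAt ray (fderiv ℝ f (x + s • y) y) s :=
      (hf.differentiable one_ne_zero _).hasFDerivAt.comp_hasDerivAt s line_hasDerivAt
    rw [ray_hasDerivAt.deriv, enorm_le_iff_norm_le]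
    exact (ContinuousLinearMap.le_opNorm _ y).trans (mul_le_of_le_one_right (norm_nonneg _) hy)
  calc ‖f x‖ₑ = ‖ray r - (ray r - ray 0)‖ₑ := by simp [ray]
    _ ≤ ‖ray r‖ₑ + ‖ray r - ray 0‖ₑ := enorm_sub_le
    _ ≤ ‖ray r‖ₑ + ∫⁻ s in Icc 0 r, ‖deriv ray s‖ₑ := by
        gcongr
        exact enorm_sub_le_lintegral_deriv_of_contDiffOn_Icc ray_contDiff.contDiffOn hr
    _ ≤ ‖ray r‖ₑ + ∫⁻ s in Ioc 0 r, ‖fderiv ℝ f (x + s • y)‖ₑ := by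
        rw [← restrict_Ioc_eq_restrict_Icc]
        gcongr with s
        exact enorm_deriv_ray_le s

open Module (finrank)

section Morrey

variable {V : Type*} [NormedAddCommGroup V] [NormedSpace ℝ V] [FiniteDimensional ℝ V]
  [MeasurableSpace V] (μ : Measure V) [μ.IsAddHaarMeasure] {p : ℝ}

/-- The constant in the `p`-th power form of Morrey's inequality on a space of dimension `n`:
`1 / μ(B₁)` comes from averaging over the unit ball, `(1 - n / p)⁻¹` from `∫₀ʳ s ^ (-n / p) ds`, and
`2 ^ (p - 1)` from the convexity of `t ↦ t ^ p`. -/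
def morreyConst (p : ℝ) : ℝ :=
  2 ^ (p - 1) * ((1 - finrank ℝ V / p)⁻¹ ^ p / μ.real (ball 0 1))

theorem measureReal_unitBall_pos : 0 < μ.real (ball 0 1) :=
  ENNReal.toReal_pos (measure_ball_pos μ _ one_pos).ne' measure_ball_lt_top.ne

theorem morreyConst_pos (hnp : finrank ℝ V < p) : 0 < morreyConst μ p := by
  have p_pos : 0 < p := (Nat.cast_nonneg _).trans_lt hnp
  have exponent_pos : 0 < 1 - finrank ℝ V / p := sub_pos.2 ((div_lt_one p_pos).2 hnp)
  have ball_pos := measureReal_unitBall_pos μ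
  unfold morreyConst
  positivity

theorem ofReal_morreyConst (hnp : finrank ℝ V < p) :
    ENNReal.ofReal (morreyConst μ p) = (μ (ball 0 1))⁻¹ * 2 ^ (p - 1)
      * ENNReal.ofReal ((1 - finrank ℝ V / p)⁻¹ ^ p) := by
  have p_pos : 0 < p := (Nat.cast_nonneg _).trans_lt hnp
  have exponent_pos : 0 < 1 - finrank ℝ V / p := sub_pos.2 ((div_lt_one p_pos).2 hnp)
  rw [morreyConst, ENNReal.ofReal_mul (by positivity), div_eq_mul_inv,
    ENNReal.ofReal_mul (by positivity), ENNReal.ofReal_inv_of_pos (measureReal_unitBall_pos μ),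
    ofReal_measureReal, ← ENNReal.ofReal_rpow_of_pos two_pos, ENNReal.ofReal_ofNat]
  ring

variable [BorelSpace V] {F : Type*} [NormedAddCommGroup F] {f : V → F}

theorem setLAverage_ball_comp_add_smul (g : V → ℝ≥0∞) (x : V) {s : ℝ} (hs : 0 < s) :
    ⨍⁻ y in ball 0 1, g (x + s • y) ∂μ = ⨍⁻ z in ball x s, g z ∂μ := by
  have preimage_ball : (fun y ↦ x + s • y) ⁻¹' ball x s = ball 0 1 := by
    ext y
    simp [norm_smul, abs_of_pos hs, hs]
  have setLIntegral_comp : ∫⁻ y in ball 0 1, g (x + s • y) ∂μ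
      = ENNReal.ofReal |(s ^ finrank ℝ V)⁻¹| * ∫⁻ z in ball x s, g z ∂μ := by
    calc ∫⁻ y in ball 0 1, g (x + s • y) ∂μ
        = ∫⁻ y, (ball x s).indicator g (x + s • y) ∂μ := by
          rw [← preimage_ball, ← lintegral_indicator (measurableSet_ball.preimage (by fun_prop))]
          rfl
      _ = ∫⁻ z, (ball x s).indicator g (x + z) ∂μ.map (s • ·) :=
          (lintegral_map_equiv (fun z ↦ (ball x s).indicator g (x + z))
            (Homeomorph.smulOfNeZero s hs.ne').toMeasurableEquiv).symm
      _ = ENNReal.ofReal |(s ^ finrank ℝ V)⁻¹| * ∫⁻ z in ball x s, g z ∂μ := by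
          rw [Measure.map_addHaar_smul μ hs.ne', lintegral_smul_measure,
            lintegral_add_left_eq_self _ x, lintegral_indicator measurableSet_ball, smul_eq_mul]
  rw [setLAverage_eq, setLAverage_eq, setLIntegral_comp, Measure.addHaar_ball_of_pos μ x hs,
    abs_of_pos (by positivity), ENNReal.ofReal_inv_of_pos (by positivity), div_eq_mul_inv,
    div_eq_mul_inv, ENNReal.mul_inv (by simp [hs]) (by simp)]
  ring

theorem setLAverage_ball_enorm_le (hf : AEStronglyMeasurable f μ) (hp : 1 ≤ p) (x : V) {s : ℝ}
    (hs : 0 < s) :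
    ⨍⁻ z in ball x s, ‖f z‖ₑ ∂μ
      ≤ μ (ball 0 1) ^ (-(1 / p)) * ENNReal.ofReal (s ^ (-(finrank ℝ V / p))) * eLpNorm' f p μ := by
  have : NeZero (μ.restrict (ball x s)) :=
    ⟨by simpa using (measure_ball_pos μ x hs).ne'⟩
  have : IsFiniteMeasure (μ.restrict (ball x s)) := ⟨by simpa using measure_ball_lt_top⟩
  calc ⨍⁻ z in ball x s, ‖f z‖ₑ ∂μ
      ≤ μ (ball x s) ^ (-(1 / p)) * eLpNorm' f p (μ.restrict (ball x s)) := by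
        simpa using laverage_enorm_le_rpow_mul_eLpNorm' (hf.restrict (s := ball x s)) hp
    _ ≤ μ (ball x s) ^ (-(1 / p)) * eLpNorm' f p μ := by
        gcongr
        exact Measure.restrict_le_self
    _ = _ := by
        rw [Measure.addHaar_ball_of_pos μ x hs, ENNReal.mul_rpow_of_ne_top (by simp)
          measure_ball_lt_top.ne, ENNReal.ofReal_rpow_of_pos (by positivity),
          ← Real.rpow_natCast_mul hs.le, mul_neg, mul_one_div, mul_comm (ENNReal.ofReal _)]

variable [NormedSpace ℝ F]

theorem enorm_le_setLAverage_add_lintegral_setLAverage_fderiv (hf : ContDiff ℝ 1 f)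
    (x : V) {r : ℝ} (hr : 0 < r) :
    ‖f x‖ₑ ≤ ⨍⁻ z in ball x r, ‖f z‖ₑ ∂μ
      + ∫⁻ s in Ioc 0 r, ⨍⁻ z in ball x s, ‖fderiv ℝ f z‖ₑ ∂μ := by
  have f_continuous := hf.continuous
  have _fderiv_continuous := hf.continuous_fderiv one_ne_zero
  calc ‖f x‖ₑ = ⨍⁻ _ in ball 0 1, ‖f x‖ₑ ∂μ :=
        (setLAverage_const (measure_ball_pos μ _ one_pos).ne' measure_ball_lt_top.ne _).symm
    _ ≤ ⨍⁻ y in ball 0 1, (‖f (x + r • y)‖ₑ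
          + ∫⁻ s in Ioc 0 r, ‖fderiv ℝ f (x + s • y)‖ₑ) ∂μ := by
        rw [setLAverage_eq, setLAverage_eq]
        refine ENNReal.div_le_div_right (setLIntegral_mono' measurableSet_ball fun y hy ↦ ?_) _
        exact enorm_le_enorm_add_lintegral_fderiv hf x (mem_ball_zero_iff.1 hy).le hr.le
    _ = ⨍⁻ y in ball 0 1, ‖f (x + r • y)‖ₑ ∂μ
          + ∫⁻ s in Ioc 0 r, ⨍⁻ y in ball 0 1, ‖fderiv ℝ f (x + s • y)‖ₑ ∂μ := by
        simp only [setLAverage_eq']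
        rw [lintegral_add_left (Continuous.measurable (by fun_prop)), lintegral_lintegral_swap]
        exact Continuous.aemeasurable (by simp only [Function.uncurry_def]; fun_prop)
    _ = ⨍⁻ z in ball x r, ‖f z‖ₑ ∂μ
          + ∫⁻ s in Ioc 0 r, ⨍⁻ z in ball x s, ‖fderiv ℝ f z‖ₑ ∂μ := by
        congr 1
        · exact setLAverage_ball_comp_add_smul μ (fun z ↦ ‖f z‖ₑ) x hr
        · exact setLIntegral_congr_fun measurableSet_Ioc fun s hs ↦
            setLAverage_ball_comp_add_smul μ (fun z ↦ ‖fderiv ℝ f z‖ₑ) x hs.1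

theorem enorm_le_eLpNorm'_add_eLpNorm'_fderiv (hf : ContDiff ℝ 1 f) (hp : 1 ≤ p)
    (hnp : finrank ℝ V < p) (x : V) {r : ℝ} (hr : 0 < r) :
    ‖f x‖ₑ ≤ μ (ball 0 1) ^ (-(1 / p)) *
      (ENNReal.ofReal (r ^ (-(finrank ℝ V / p))) * eLpNorm' f p μ
        + ENNReal.ofReal (r ^ (1 - finrank ℝ V / p) / (1 - finrank ℝ V / p))
          * eLpNorm' (fderiv ℝ f) p μ) := by
  have exponent_lt_one : finrank ℝ V / p < 1 := (div_lt_one (by positivity)).2 hnp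
  have f_meas := hf.continuous.aestronglyMeasurable (μ := μ)
  have fderiv_meas := (hf.continuous_fderiv one_ne_zero).aestronglyMeasurable (μ := μ)
  calc ‖f x‖ₑ ≤ ⨍⁻ z in ball x r, ‖f z‖ₑ ∂μ
        + ∫⁻ s in Ioc 0 r, ⨍⁻ z in ball x s, ‖fderiv ℝ f z‖ₑ ∂μ :=
        enorm_le_setLAverage_add_lintegral_setLAverage_fderiv μ hf x hr
    _ ≤ μ (ball 0 1) ^ (-(1 / p)) * ENNReal.ofReal (r ^ (-(finrank ℝ V / p))) * eLpNorm' f p μ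
        + ∫⁻ s in Ioc 0 r, μ (ball 0 1) ^ (-(1 / p)) * ENNReal.ofReal (s ^ (-(finrank ℝ V / p)))
          * eLpNorm' (fderiv ℝ f) p μ :=
        add_le_add (setLAverage_ball_enorm_le μ f_meas hp x hr) <|
          setLIntegral_mono' measurableSet_Ioc fun s hs ↦
            setLAverage_ball_enorm_le μ fderiv_meas hp x hs.1
    _ = _ := by
        rw [lintegral_mul_const _ (by fun_prop), lintegral_const_mul _ (by fun_prop),
          lintegral_Ioc_ofReal_rpow_neg exponent_lt_one hr.le]
        ring

theorem enorm_rpow_le_morreyConst_mul_lintegral (hf : ContDiff ℝ 1 f) (hp : 1 ≤ p)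
    (hnp : finrank ℝ V < p) (x : V) {r : ℝ} (hr : 0 < r) :
    ‖f x‖ₑ ^ p ≤ ENNReal.ofReal (morreyConst μ p)
      * (ENNReal.ofReal (r ^ (-finrank ℝ V : ℝ)) * ∫⁻ z, ‖f z‖ₑ ^ p ∂μ
        + ENNReal.ofReal (r ^ (p - finrank ℝ V)) * ∫⁻ z, ‖fderiv ℝ f z‖ₑ ^ p ∂μ) := by
  have p_pos : 0 < p := one_pos.trans_le hp
  have exponent_pos : 0 < 1 - finrank ℝ V / p := sub_pos.2 ((div_lt_one p_pos).2 hnp)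
  set k := (1 - finrank ℝ V / p)⁻¹
  have one_le_k : 1 ≤ k := (one_le_inv₀ exponent_pos).2 (sub_le_self _ (by positivity))
  set m := μ (ball 0 1)
  set A := eLpNorm' f p μ
  set D := eLpNorm' (fderiv ℝ f) p μ
  have value_coeff : ENNReal.ofReal (r ^ (-(finrank ℝ V / p))) ^ p
      ≤ ENNReal.ofReal (k ^ p) * ENNReal.ofReal (r ^ (-finrank ℝ V : ℝ)) := by
    rw [ENNReal.ofReal_rpow_of_pos (by positivity), ← Real.rpow_mul hr.le, neg_mul,
      div_mul_cancel₀ _ p_pos.ne']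
    exact le_mul_of_one_le_left' (ENNReal.one_le_ofReal.2 (Real.one_le_rpow one_le_k p_pos.le))
  have fderiv_coeff : ENNReal.ofReal (r ^ (1 - finrank ℝ V / p) / (1 - finrank ℝ V / p)) ^ p
      = ENNReal.ofReal (k ^ p) * ENNReal.ofReal (r ^ (p - finrank ℝ V)) := by
    rw [ENNReal.ofReal_rpow_of_pos (by positivity), div_eq_inv_mul,
      Real.mul_rpow (by positivity) (by positivity), ENNReal.ofReal_mul (by positivity),
      ← Real.rpow_mul hr.le, sub_mul, one_mul, div_mul_cancel₀ _ p_pos.ne']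
  calc ‖f x‖ₑ ^ p
      ≤ (m ^ (-(1 / p)) * (ENNReal.ofReal (r ^ (-(finrank ℝ V / p))) * A
        + ENNReal.ofReal (r ^ (1 - finrank ℝ V / p) / (1 - finrank ℝ V / p)) * D)) ^ p := by
        gcongr
        exact enorm_le_eLpNorm'_add_eLpNorm'_fderiv μ hf hp hnp x hr
    _ = m⁻¹ * (ENNReal.ofReal (r ^ (-(finrank ℝ V / p))) * A
        + ENNReal.ofReal (r ^ (1 - finrank ℝ V / p) / (1 - finrank ℝ V / p)) * D) ^ p := by
        rw [ENNReal.mul_rpow_of_nonneg _ _ p_pos.le, ← ENNReal.rpow_mul, neg_mul,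
          one_div_mul_cancel p_pos.ne', ENNReal.rpow_neg_one]
    _ ≤ m⁻¹ * (2 ^ (p - 1) * ((ENNReal.ofReal (r ^ (-(finrank ℝ V / p))) * A) ^ p
        + (ENNReal.ofReal (r ^ (1 - finrank ℝ V / p) / (1 - finrank ℝ V / p)) * D) ^ p)) := by
        gcongr
        exact ENNReal.rpow_add_le_mul_rpow_add_rpow _ _ hp
    _ ≤ m⁻¹ * (2 ^ (p - 1) *
        (ENNReal.ofReal (k ^ p) * ENNReal.ofReal (r ^ (-finrank ℝ V : ℝ)) * A ^ p
        + ENNReal.ofReal (k ^ p) * ENNReal.ofReal (r ^ (p - finrank ℝ V)) * D ^ p)) := by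
        rw [ENNReal.mul_rpow_of_nonneg _ _ p_pos.le, ENNReal.mul_rpow_of_nonneg _ _ p_pos.le,
          fderiv_coeff]
        gcongr
    _ = _ := by
        rw [ofReal_morreyConst μ hnp, lintegral_rpow_enorm_eq_rpow_eLpNorm' p_pos,
          lintegral_rpow_enorm_eq_rpow_eLpNorm' p_pos]
        ring

theorem norm_rpow_le_morreyConst_mul_integral (hf : ContDiff ℝ 1 f) (hp : 1 ≤ p)
    (hnp : finrank ℝ V < p) (hf_int : Integrable (fun z ↦ ‖f z‖ ^ p) μ)
    (hf'_int : Integrable (fun z ↦ ‖fderiv ℝ f z‖ ^ p) μ) (x : V) {r : ℝ} (hr : 0 < r) :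
    ‖f x‖ ^ p ≤ morreyConst μ p * (r ^ (-finrank ℝ V : ℝ) * ∫ z, ‖f z‖ ^ p ∂μ
      + r ^ (p - finrank ℝ V) * ∫ z, ‖fderiv ℝ f z‖ ^ p ∂μ) := by
  have p_pos : 0 < p := one_pos.trans_le hp
  have const_pos := morreyConst_pos μ hnp
  have morrey := enorm_rpow_le_morreyConst_mul_lintegral μ hf hp hnp x hr
  rw [lintegral_enorm_rpow_eq_ofReal_integral p_pos.le hf_int,
    lintegral_enorm_rpow_eq_ofReal_integral p_pos.le hf'_int, ← ofReal_norm,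
    ENNReal.ofReal_rpow_of_nonneg (norm_nonneg _) p_pos.le,
    ← ENNReal.ofReal_mul (by positivity), ← ENNReal.ofReal_mul (by positivity),
    ← ENNReal.ofReal_add (by positivity) (by positivity),
    ← ENNReal.ofReal_mul (by positivity)] at morrey
  exact (ENNReal.ofReal_le_ofReal_iff (by positivity)).1 morrey

theorem statement4_general (hf : ContDiff ℝ 1 f) (hn : 0 < finrank ℝ V) (hnp : finrank ℝ V < p)
    (hf_int : Integrable (fun x ↦ ‖f x‖ ^ p) μ)
    (hf'_int : Integrable (fun x ↦ ‖fderiv ℝ f x‖ ^ p) μ) {E : Set V} (hE : μ E < ⊤) {ε : ℝ}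
    (hε : 0 < ε) :
    ∫ x in E, ‖f x‖ ^ p ∂μ ≤
      morreyConst μ p / ε ^ ((p - finrank ℝ V) / finrank ℝ V) * μ.real E ^ (p / finrank ℝ V)
          * ∫ x, ‖fderiv ℝ f x‖ ^ p ∂μ
        + morreyConst μ p * ε * ∫ x, ‖f x‖ ^ p ∂μ := by
  have one_le_n : (1 : ℝ) ≤ finrank ℝ V := Nat.one_le_cast.2 hn
  have hp : 1 ≤ p := one_le_n.trans hnp.le
  have const_pos := morreyConst_pos μ hnp
  rcases (measureReal_nonneg (μ := μ) (s := E)).eq_or_lt' with E_null | E_pos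
  · rw [setIntegral_measure_zero _ ((measureReal_eq_zero_iff hE.ne).1 E_null)]
    positivity
  obtain ⟨r, hr, value_scale, fderiv_scale⟩ :=
    exists_pos_mul_rpow_neg_eq_and_mul_rpow_sub_eq (Nat.cast_pos.2 hn).ne' E_pos hε p
  set P := ∫ x, ‖f x‖ ^ p ∂μ
  set G := ∫ x, ‖fderiv ℝ f x‖ ^ p ∂μ
  calc ∫ x in E, ‖f x‖ ^ p ∂μ
      ≤ ∫ _ in E, morreyConst μ p * (r ^ (-finrank ℝ V : ℝ) * P + r ^ (p - finrank ℝ V) * G) ∂μ :=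
        setIntegral_mono hf_int.integrableOn (integrableOn_const hE.ne)
          fun x ↦ norm_rpow_le_morreyConst_mul_integral μ hf hp hnp hf_int hf'_int x hr
    _ = morreyConst μ p * (μ.real E * r ^ (p - finrank ℝ V)) * G
        + morreyConst μ p * (μ.real E * r ^ (-finrank ℝ V : ℝ)) * P := by
        rw [setIntegral_const, smul_eq_mul]
        ring
    _ = _ := by
        rw [value_scale, fderiv_scale]
        ring

end Morrey

theorem statement4 (N : ℕ) (hN : 0 < N) (p : ℝ) (hp1 : 1 < p) (hpN : (N : ℝ) < p) :
    ∃ C > (0 : ℝ), ∀ E : Set (EucN N), MeasurableSet E → volume E < ⊤ →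
      ∀ φ : EucN N → ℝ, ContDiff ℝ (⊤ : ℕ∞) φ → HasCompactSupport φ →
        ∀ ε > (0 : ℝ),
          (∫ x in E, |φ x| ^ p) ≤
            (C / ε ^ ((p - N) / N)) * (volume E).toReal ^ (p / N) *
                (∫ x, ‖gradient φ x‖ ^ p)
              + C * ε * ∫ x, |φ x| ^ p := by
  have hp : 0 < p := by positivity
  refine ⟨morreyConst (volume : Measure (EucN N)) p, morreyConst_pos _ (by simpa), ?_⟩
  intro E _ hE φ hφ hφc ε hε
  have hφ1 : ContDiff ℝ 1 φ := hφ.of_le (mod_cast le_top)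
  have φ_int := integrable_norm_rpow_of_hasCompactSupport (ν := volume) hφ.continuous hφc hp
  have fderiv_int := integrable_norm_rpow_of_hasCompactSupport (ν := volume)
    (hφ1.continuous_fderiv one_ne_zero) (hφc.fderiv ℝ) hp
  simpa [norm_gradient_eq_norm_fderiv, measureReal_def] using
    statement4_general volume hφ1 (by simpa) (by simpa) φ_int fderiv_int hE hε

end
end

section
/- Let 1<p<∞ and let Ω ⊆ ℝ^N be an open set such that E_p(Ω) < +∞. Then λ_{1,p}(Ω) > 0 if and only if E_p(Ω) > 0. -/
open MeasureTheory Filter Topology Metric Set ENNReal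
open scoped RealInnerProductSpace

noncomputable section

/-!
Since `λ_{1,p}` decreases when the domain grows, `λ_{1,p}(Ω) ≤ E_p(Ω)`. Conversely, `λ_{1,p}(Ω) > 0`
amounts to a Poincaré inequality for the test functions on `Ω`, and such an inequality survives the
addition of a bounded set `s` to the domain. To see this, cut a test function `φ` off on a ball of
radius `K` containing `s`: the Poincaré inequality controls `φ` off the ball of radius `2K`, and the
translation estimate `‖φ(· + v) - φ‖_p ≤ ‖v‖ ‖∇φ‖_p` with `‖v‖ = 4K` transports this control into
the ball. The cutoff costs an additional term `‖φ‖_p / K`, which is absorbed for `K` large.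
-/

section TranslationEstimate

variable {E F : Type*} [NormedAddCommGroup E] [NormedSpace ℝ E] [NormedAddCommGroup F]

lemma rpow_lintegral_le_lintegral_rpow {α : Type*} [MeasurableSpace α] {μ : Measure α}
    [IsProbabilityMeasure μ] {f : α → ℝ≥0∞} (hf : AEMeasurable f μ) {r : ℝ} (hr : 1 ≤ r) :
    (∫⁻ x, f x ∂μ) ^ r ≤ ∫⁻ x, f x ^ r ∂μ := by
  have hr0 : 0 < r := one_pos.trans_le hr
  have := eLpNorm'_le_eLpNorm'_of_exponent_le one_pos hr μ hf.aestronglyMeasurable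
  simpa [eLpNorm', ENNReal.le_rpow_inv_iff hr0] using this

variable [NormedSpace ℝ F]

lemma enorm_comp_add_right_sub_rpow_le {f : E → F} (hf : ContDiff ℝ 1 f) (x h : E) {r : ℝ}
    (hr : 1 ≤ r) :
    ‖f (x + h) - f x‖ₑ ^ r ≤
      ‖h‖ₑ ^ r * ∫⁻ t in Icc (0 : ℝ) 1, ‖fderiv ℝ f (x + t • h)‖ₑ ^ r := by
  have hr0 : 0 ≤ r := zero_le_one.trans hr
  have : IsProbabilityMeasure ((volume : Measure ℝ).restrict (Icc 0 1)) := ⟨by simp⟩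
  have hcont : Continuous fun t : ℝ => ‖fderiv ℝ f (x + t • h)‖ₑ :=
    ((hf.continuous_fderiv one_ne_zero).comp (by fun_prop)).enorm
  have deriv_le (t : ℝ) :
      ‖deriv (fun t : ℝ => f (x + t • h)) t‖ₑ ≤ ‖h‖ₑ * ‖fderiv ℝ f (x + t • h)‖ₑ := by
    have hline : HasDerivAt (fun t : ℝ => x + t • h) h t := by
      simpa using ((hasDerivAt_id t).smul_const h).const_add x
    have hderiv := ((hf.differentiable one_ne_zero _).hasFDerivAt.comp_hasDerivAt t hline).deriv
    rw [show (fun t : ℝ => f (x + t • h)) = f ∘ fun t => x + t • h from rfl, hderiv, mul_comm]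
    exact ContinuousLinearMap.le_opENorm _ _
  have increment_le :
      ‖f (x + h) - f x‖ₑ ≤ ‖h‖ₑ * ∫⁻ t in Icc (0 : ℝ) 1, ‖fderiv ℝ f (x + t • h)‖ₑ := by
    have hline : ContDiff ℝ 1 fun t : ℝ => f (x + t • h) := hf.comp (by fun_prop)
    have := enorm_sub_le_lintegral_deriv_of_contDiffOn_Icc hline.contDiffOn zero_le_one
    rw [← lintegral_const_mul' _ _ enorm_ne_top]
    simpa using this.trans (lintegral_mono deriv_le)
  calc ‖f (x + h) - f x‖ₑ ^ r
      ≤ (‖h‖ₑ * ∫⁻ t in Icc (0 : ℝ) 1, ‖fderiv ℝ f (x + t • h)‖ₑ) ^ r := by gcongr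
    _ = ‖h‖ₑ ^ r * (∫⁻ t in Icc (0 : ℝ) 1, ‖fderiv ℝ f (x + t • h)‖ₑ) ^ r :=
        ENNReal.mul_rpow_of_nonneg _ _ hr0
    _ ≤ _ := by
        gcongr
        exact rpow_lintegral_le_lintegral_rpow hcont.measurable.aemeasurable hr

variable [MeasurableSpace E] [BorelSpace E] {μ : Measure E} [SFinite μ] [μ.IsAddRightInvariant]

lemma lintegral_enorm_comp_add_right_sub_rpow_le {f : E → F} (hf : ContDiff ℝ 1 f) (h : E) {r : ℝ}
    (hr : 1 ≤ r) :
    ∫⁻ x, ‖f (x + h) - f x‖ₑ ^ r ∂μ ≤ ‖h‖ₑ ^ r * ∫⁻ x, ‖fderiv ℝ f x‖ₑ ^ r ∂μ := by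
  have hmeas : Measurable (Function.uncurry fun (x : E) (t : ℝ) =>
      ‖fderiv ℝ f (x + t • h)‖ₑ ^ r) := by
    have : Continuous fun z : E × ℝ => fderiv ℝ f (z.1 + z.2 • h) :=
      (hf.continuous_fderiv one_ne_zero).comp (by fun_prop)
    exact this.enorm.measurable.pow_const r
  have translate (t : ℝ) :
      ∫⁻ x, ‖fderiv ℝ f (x + t • h)‖ₑ ^ r ∂μ = ∫⁻ x, ‖fderiv ℝ f x‖ₑ ^ r ∂μ :=
    lintegral_add_right_eq_self (fun x => ‖fderiv ℝ f x‖ₑ ^ r) (t • h)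
  calc ∫⁻ x, ‖f (x + h) - f x‖ₑ ^ r ∂μ
      ≤ ∫⁻ x, (‖h‖ₑ ^ r * ∫⁻ t in Icc (0 : ℝ) 1, ‖fderiv ℝ f (x + t • h)‖ₑ ^ r) ∂μ :=
        lintegral_mono fun x => enorm_comp_add_right_sub_rpow_le hf x h hr
    _ = ‖h‖ₑ ^ r * ∫⁻ t in Icc (0 : ℝ) 1, (∫⁻ x, ‖fderiv ℝ f (x + t • h)‖ₑ ^ r ∂μ) := by
        rw [lintegral_const_mul' _ _ (by finiteness), lintegral_lintegral_swap hmeas.aemeasurable]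
    _ = ‖h‖ₑ ^ r * ∫⁻ x, ‖fderiv ℝ f x‖ₑ ^ r ∂μ := by simp [translate]

lemma eLpNorm_comp_add_right_sub_le {f : E → F} (hf : ContDiff ℝ 1 f) (h : E) {q : ℝ≥0∞}
    (hq : 1 ≤ q) (hq_top : q ≠ ∞) :
    eLpNorm (fun x => f (x + h) - f x) q μ ≤ ‖h‖ₑ * eLpNorm (fderiv ℝ f) q μ := by
  have hq0 : q ≠ 0 := (one_pos.trans_le hq).ne'
  have hr : 1 ≤ q.toReal := by simpa using ENNReal.toReal_mono hq_top hq
  have hr0 : 0 < q.toReal := one_pos.trans_le hr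
  rw [eLpNorm_eq_lintegral_rpow_enorm_toReal hq0 hq_top,
    eLpNorm_eq_lintegral_rpow_enorm_toReal hq0 hq_top, one_div, ENNReal.rpow_inv_le_iff hr0,
    ENNReal.mul_rpow_of_nonneg _ _ hr0.le, ENNReal.rpow_inv_rpow hr0.ne']
  exact lintegral_enorm_comp_add_right_sub_rpow_le hf h hr

end TranslationEstimate

lemma eLpNorm_le_of_eq_or_eq_comp_add_right {E F : Type*} [AddGroup E] [MeasurableSpace E]
    [MeasurableAdd E] {μ : Measure E} [μ.IsAddRightInvariant] [NormedAddCommGroup F] {f g : E → F}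
    {v : E} (hf : AEStronglyMeasurable f μ) (hg : AEStronglyMeasurable g μ)
    (h : ∀ x, g x = f x ∨ g (x + v) = f (x + v)) {q : ℝ≥0∞} (hq : 1 ≤ q) :
    eLpNorm f q μ ≤ 2 * eLpNorm g q μ + eLpNorm (fun x => f (x + v) - f x) q μ := by
  have hv : MeasurePreserving (· + v) μ μ := measurePreserving_add_right μ v
  have hgv : AEStronglyMeasurable (fun x => g (x + v)) μ := hg.comp_measurePreserving hv
  have hfv : AEStronglyMeasurable (fun x => f (x + v) - f x) μ :=
    (hf.comp_measurePreserving hv).sub hf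
  have pointwise (x : E) : ‖f x‖ ≤ ‖g x‖ + (‖g (x + v)‖ + ‖f (x + v) - f x‖) := by
    rcases h x with hx | hx
    · rw [hx]
      exact le_add_of_nonneg_right (by positivity)
    · rw [hx]
      have := norm_sub_le (f (x + v)) (f (x + v) - f x)
      rw [_root_.sub_sub_cancel] at this
      exact this.trans (le_add_of_nonneg_left (norm_nonneg _))
  calc eLpNorm f q μ
      ≤ eLpNorm (fun x => ‖g x‖ + (‖g (x + v)‖ + ‖f (x + v) - f x‖)) q μ :=
        eLpNorm_mono_real pointwise
    _ ≤ eLpNorm g q μ +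
          (eLpNorm (fun x => g (x + v)) q μ + eLpNorm (fun x => f (x + v) - f x) q μ) := by
        rw [← eLpNorm_norm g, ← eLpNorm_norm (fun x => g (x + v)),
          ← eLpNorm_norm (fun x => f (x + v) - f x)]
        exact (eLpNorm_add_le hg.norm (hgv.norm.add hfv.norm) hq).trans
          (add_le_add_right (eLpNorm_add_le hgv.norm hfv.norm hq) _)
    _ = 2 * eLpNorm g q μ + eLpNorm (fun x => f (x + v) - f x) q μ := by
        have : eLpNorm (fun x => g (x + v)) q μ = eLpNorm g q μ :=
          eLpNorm_comp_measurePreserving hg hv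
        rw [this, ← add_assoc, two_mul]

lemma eLpNorm_fderiv_smul_le {E F : Type*} [NormedAddCommGroup E] [NormedSpace ℝ E]
    [MeasurableSpace E] [BorelSpace E] {μ : Measure E} [NormedAddCommGroup F] [NormedSpace ℝ F]
    {η : E → ℝ} {φ : E → F} {ε : ℝ} {q : ℝ≥0∞} (hη : Differentiable ℝ η) (hη_le : ∀ x, ‖η x‖ ≤ 1)
    (hη_fderiv : ∀ x, ‖fderiv ℝ η x‖ ≤ ε) (hφ : ContDiff ℝ 1 φ) (hq : 1 ≤ q) :
    eLpNorm (fderiv ℝ (η • φ)) q μ ≤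
      eLpNorm (fderiv ℝ φ) q μ + ENNReal.ofReal ε * eLpNorm φ q μ := by
  have hε : 0 ≤ ε := (norm_nonneg _).trans (hη_fderiv 0)
  have pointwise (x : E) : ‖fderiv ℝ (η • φ) x‖ ≤ ‖fderiv ℝ φ x‖ + ε * ‖φ x‖ := by
    rw [fderiv_smul (hη x) (hφ.differentiable one_ne_zero x)]
    refine (norm_add_le _ _).trans (add_le_add ?_ ?_)
    · rw [norm_smul]
      exact mul_le_of_le_one_left (norm_nonneg _) (hη_le x)
    · rw [ContinuousLinearMap.norm_smulRight_apply]
      gcongr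
      exact hη_fderiv x
  calc eLpNorm (fderiv ℝ (η • φ)) q μ
      ≤ eLpNorm (fun x => ‖fderiv ℝ φ x‖ + ε * ‖φ x‖) q μ := eLpNorm_mono_real pointwise
    _ ≤ eLpNorm (fun x => ‖fderiv ℝ φ x‖) q μ + eLpNorm (fun x => ε * ‖φ x‖) q μ :=
        eLpNorm_add_le (hφ.continuous_fderiv one_ne_zero).norm.aestronglyMeasurable
          (hφ.continuous.norm.const_mul ε).aestronglyMeasurable hq
    _ ≤ eLpNorm (fderiv ℝ φ) q μ + ENNReal.ofReal ε * eLpNorm φ q μ := by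
        rw [eLpNorm_norm]
        gcongr
        refine eLpNorm_le_mul_eLpNorm_of_ae_le_mul (.of_forall fun x => ?_) q
        rw [norm_mul, norm_norm, Real.norm_of_nonneg hε]

section FarCutoff

variable {E : Type*} [NormedAddCommGroup E] [NormedSpace ℝ E] [HasContDiffBump E]

/-- A smooth cutoff that vanishes on the ball of radius `K` around the origin and equals `1` outside
the ball of radius `2 * K`. All of these are dilations of a single function, so that the gradient is
of order `1 / K`. -/
def farCutoff (K : ℝ) (x : E) : ℝ :=
  1 - (⟨1, 2, one_pos, one_lt_two⟩ : ContDiffBump (0 : E)) (K⁻¹ • x)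

lemma contDiff_farCutoff (K : ℝ) {n : ℕ∞} : ContDiff ℝ n (farCutoff K : E → ℝ) :=
  contDiff_const.sub ((ContDiffBump.contDiff _).comp (contDiff_id.const_smul K⁻¹))

lemma norm_farCutoff_le_one (K : ℝ) (x : E) : ‖farCutoff K x‖ ≤ 1 := by
  rw [farCutoff, Real.norm_of_nonneg (sub_nonneg.2 (ContDiffBump.le_one _))]
  exact sub_le_self _ (ContDiffBump.nonneg _)

lemma farCutoff_eq_zero {K : ℝ} (hK : 0 < K) {x : E} (hx : ‖x‖ ≤ K) : farCutoff K x = 0 := by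
  rw [farCutoff, ContDiffBump.one_of_mem_closedBall, sub_self]
  rwa [mem_closedBall_zero_iff, norm_smul, Real.norm_of_nonneg (by positivity),
    inv_mul_le_iff₀ hK, mul_one]

lemma farCutoff_eq_one {K : ℝ} (hK : 0 < K) {x : E} (hx : 2 * K ≤ ‖x‖) : farCutoff K x = 1 := by
  rw [farCutoff, ContDiffBump.zero_of_le_dist, sub_zero]
  rwa [dist_zero_right, norm_smul, Real.norm_of_nonneg (by positivity), le_inv_mul_iff₀ hK,
    mul_comm]

lemma tsupport_farCutoff_subset {K : ℝ} (hK : 0 < K) :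
    tsupport (farCutoff K : E → ℝ) ⊆ (ball 0 K)ᶜ := by
  refine closure_minimal (fun x hx hxK => hx ?_) isOpen_ball.isClosed_compl
  exact farCutoff_eq_zero hK (mem_ball_zero_iff.1 hxK).le

lemma exists_norm_fderiv_farCutoff_le [FiniteDimensional ℝ E] :
    ∃ M : ℝ, ∀ K > 0, ∀ x : E, ‖fderiv ℝ (farCutoff K) x‖ ≤ M / K := by
  let χ : ContDiffBump (0 : E) := ⟨1, 2, one_pos, one_lt_two⟩
  obtain ⟨M, hM⟩ := (χ.hasCompactSupport.fderiv (𝕜 := ℝ)).exists_bound_of_continuous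
    (χ.contDiff.continuous_fderiv one_ne_zero)
  refine ⟨M, fun K hK x => ?_⟩
  have hfderiv : fderiv ℝ (farCutoff K) x = -(K⁻¹ • fderiv ℝ χ (K⁻¹ • x)) := by
    rw [← fderiv_comp_smul, ← fderiv_const_sub (1 : ℝ)]
    rfl
  rw [hfderiv, norm_neg, norm_smul, Real.norm_of_nonneg (by positivity), inv_mul_eq_div]
  gcongr
  exact hM _

lemma eLpNorm_le_eLpNorm_farCutoff_smul [FiniteDimensional ℝ E] [Nontrivial E] [MeasurableSpace E]
    [BorelSpace E] {μ : Measure E} [SFinite μ] [μ.IsAddRightInvariant] {F : Type*}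
    [NormedAddCommGroup F] [NormedSpace ℝ F] {φ : E → F} (hφ : ContDiff ℝ 1 φ) {K : ℝ} (hK : 0 < K)
    {q : ℝ≥0∞} (hq : 1 ≤ q) (hq_top : q ≠ ∞) :
    eLpNorm φ q μ ≤ 2 * eLpNorm ((farCutoff K : E → ℝ) • φ) q μ +
      ENNReal.ofReal (4 * K) * eLpNorm (fderiv ℝ φ) q μ := by
  obtain ⟨v, hv⟩ := exists_norm_eq E (by positivity : 0 ≤ 4 * K)
  have far_or_far (x : E) : 2 * K ≤ ‖x‖ ∨ 2 * K ≤ ‖x + v‖ := by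
    by_contra! h
    have := norm_sub_le (x + v) x
    rw [add_sub_cancel_left] at this
    linarith
  have eq_or_eq (x : E) : farCutoff K x • φ x = φ x ∨ farCutoff K (x + v) • φ (x + v) = φ (x + v) :=
    (far_or_far x).imp (fun hx => by simp [farCutoff_eq_one hK hx])
      (fun hx => by simp [farCutoff_eq_one hK hx])
  have hcont : Continuous ((farCutoff K : E → ℝ) • φ) :=
    (contDiff_farCutoff (n := 0) K).continuous.smul hφ.continuous
  refine (eLpNorm_le_of_eq_or_eq_comp_add_right hφ.continuous.aestronglyMeasurable
    hcont.aestronglyMeasurable eq_or_eq hq).trans ?_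
  gcongr
  simpa [← ofReal_norm, hv] using eLpNorm_comp_add_right_sub_le (μ := μ) hφ v hq hq_top

end FarCutoff

lemma eLpNorm_gradient {E : Type*} [NormedAddCommGroup E] [InnerProductSpace ℝ E] [CompleteSpace E]
    [MeasurableSpace E] (f : E → ℝ) (q : ℝ≥0∞) (μ : Measure E) :
    eLpNorm (fun x => gradient f x) q μ = eLpNorm (fderiv ℝ f) q μ :=
  eLpNorm_congr_norm_ae (.of_forall fun x => by simp [gradient])

lemma ofReal_integral_norm_rpow {α E : Type*} [MeasurableSpace α] {μ : Measure α}
    [NormedAddCommGroup E] {p : ℝ} (hp : 0 < p) (f : Lp E (ENNReal.ofReal p) μ) :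
    ENNReal.ofReal (∫ x, ‖f x‖ ^ p ∂μ) = ‖f‖ₑ ^ p := by
  have hint : 0 ≤ ∫ x, ‖f x‖ ^ p ∂μ := integral_nonneg fun x => by positivity
  rw [Lp.enorm_def, (Lp.memLp f).eLpNorm_eq_integral_rpow_norm (by simpa using hp) ofReal_ne_top,
    ENNReal.toReal_ofReal hp.le, ← ENNReal.ofReal_rpow_of_nonneg hint (by positivity),
    ENNReal.rpow_inv_rpow hp.ne']

lemma le_mul_of_le_add_of_mul_le_inv_four {a b d C T ε : ℝ≥0∞} (ha : a ≠ ∞)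
    (had : a ≤ 2 * d + T * b) (hdb : d ≤ C * (b + ε * a))
    (hε : C * ε ≤ 4⁻¹) : a ≤ 2 * (2 * C + T) * b := by
  have two_mul_inv_four : (2 : ℝ≥0∞) * 4⁻¹ = 2⁻¹ := by
    rw [show (4 : ℝ≥0∞) = 2 * 2 by norm_num, ENNReal.mul_inv (by simp) (by simp), ← mul_assoc,
      ENNReal.mul_inv_cancel two_ne_zero ofNat_ne_top, one_mul]
  have half_le : a / 2 ≤ (2 * C + T) * b := by
    refine ENNReal.le_of_add_le_add_right (a := a / 2) (ENNReal.div_ne_top ha two_ne_zero) ?_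
    calc a / 2 + a / 2 = a := ENNReal.add_halves a
      _ ≤ 2 * (C * (b + ε * a)) + T * b := by grw [had, hdb]
      _ = (2 * C + T) * b + 2 * (C * ε) * a := by ring
      _ ≤ (2 * C + T) * b + 2 * 4⁻¹ * a := by grw [hε]
      _ = (2 * C + T) * b + a / 2 := by rw [two_mul_inv_four, ENNReal.div_eq_inv_mul]
  calc a = 2 * (a / 2) := (ENNReal.mul_div_cancel two_ne_zero ofNat_ne_top).symm
    _ ≤ 2 * (2 * C + T) * b := by rw [mul_assoc]; gcongr

section TestFunctions

variable {N : ℕ} {A B Ω : Set (EucN N)} {φ : EucN N → ℝ}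

namespace IsTestFun

lemma mono (hφ : IsTestFun A φ) (h : A ⊆ B) : IsTestFun B φ :=
  ⟨hφ.1, hφ.2.1, hφ.2.2.trans h⟩

lemma smul_left (hφ : IsTestFun Ω φ) {η : EucN N → ℝ} (hη : ContDiff ℝ (⊤ : ℕ∞) η) :
    IsTestFun (Ω ∩ tsupport η) (η • φ) :=
  ⟨hη.smul hφ.1, hφ.2.1.smul_left, subset_inter
    ((tsupport_smul_subset_right η φ).trans hφ.2.2) (tsupport_smul_subset_left η φ)⟩

lemma const_smul (hφ : IsTestFun Ω φ) (a : ℝ) : IsTestFun Ω (a • φ) :=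
  (hφ.smul_left contDiff_const (η := fun _ => a)).mono inter_subset_left

lemma contDiff_one (hφ : IsTestFun Ω φ) : ContDiff ℝ 1 φ :=
  hφ.1.of_le (by exact_mod_cast le_top)

lemma memLp (hφ : IsTestFun Ω φ) (q : ℝ≥0∞) : MemLp φ q volume :=
  hφ.1.continuous.memLp_of_hasCompactSupport hφ.2.1

lemma memLp_gradient (hφ : IsTestFun Ω φ) (q : ℝ≥0∞) :
    MemLp (fun x => gradient φ x) q volume := by
  have hcont : Continuous (fderiv ℝ φ) := hφ.contDiff_one.continuous_fderiv one_ne_zero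
  exact ((LinearIsometryEquiv.continuous _).comp hcont).memLp_of_hasCompactSupport
    ((hφ.2.1.fderiv (𝕜 := ℝ)).comp_left (map_zero _))

end IsTestFun

/-- The `L^q` Poincaré inequality with constant `C` for the test functions on `Ω`. The gradient is
measured through `fderiv`, which has the same pointwise norm. -/
def HasPoincareConst (q : ℝ≥0∞) (Ω : Set (EucN N)) (C : ℝ≥0∞) : Prop :=
  ∀ φ, IsTestFun Ω φ → eLpNorm φ q volume ≤ C * eLpNorm (fderiv ℝ φ) q volume

lemma hasPoincareConst_empty (q C : ℝ≥0∞) : HasPoincareConst q (∅ : Set (EucN N)) C := by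
  rintro φ ⟨-, -, hφ⟩
  simp [tsupport_eq_empty_iff.1 (subset_empty_iff.1 hφ)]

lemma exists_hasPoincareConst_of_sdiff [Nontrivial (EucN N)] {s : Set (EucN N)}
    (hs : Bornology.IsBounded s) {q C : ℝ≥0∞} (hq : 1 ≤ q) (hq_top : q ≠ ∞) (hC : C ≠ ∞)
    (h : HasPoincareConst q (Ω \ s) C) : ∃ C' ≠ ∞, HasPoincareConst q Ω C' := by
  obtain ⟨R, hR⟩ := (isBounded_iff_subset_closedBall 0).1 hs
  obtain ⟨M, hM⟩ := exists_norm_fderiv_farCutoff_le (E := EucN N)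
  have small_gradient : ∀ᶠ K : ℝ in atTop, C * ENNReal.ofReal (M / K) ≤ 4⁻¹ := by
    have : Tendsto (fun K : ℝ => C * ENNReal.ofReal (M / K)) atTop (𝓝 (C * ENNReal.ofReal 0)) :=
      ENNReal.Tendsto.const_mul (ENNReal.tendsto_ofReal (tendsto_const_nhds.div_atTop tendsto_id))
        (.inr hC)
    exact this.eventually_le_const (by simp)
  obtain ⟨K, hKM, hRK, hK⟩ :=
    (small_gradient.and ((eventually_gt_atTop R).and (eventually_gt_atTop 0))).exists
  refine ⟨2 * (2 * C + ENNReal.ofReal (4 * K)), by finiteness, fun φ hφ => ?_⟩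
  have hcutoff : IsTestFun (Ω \ s) ((farCutoff K : EucN N → ℝ) • φ) := by
    refine (hφ.smul_left (contDiff_farCutoff K)).mono fun x hx => ⟨hx.1, fun hxs => ?_⟩
    exact tsupport_farCutoff_subset hK hx.2 (closedBall_subset_ball hRK (hR hxs))
  refine le_mul_of_le_add_of_mul_le_inv_four (hφ.memLp q).eLpNorm_ne_top
    (eLpNorm_le_eLpNorm_farCutoff_smul hφ.contDiff_one hK hq hq_top) ((h _ hcutoff).trans ?_) hKM
  gcongr
  exact eLpNorm_fderiv_smul_le ((contDiff_farCutoff K).differentiable one_ne_zero)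
    (norm_farCutoff_le_one K) (hM K hK) hφ.contDiff_one hq

end TestFunctions

section FirstEigenvalue

variable {N : ℕ} {p : ℝ} {A B Ω : Set (EucN N)}

lemma W10_mono (hp : 1 ≤ p) (h : A ⊆ B) : W10 N p hp A ⊆ W10 N p hp B := by
  let _ := fact_one_le_ofReal hp
  exact closure_mono fun w ⟨ψ, hψ, hw⟩ => ⟨ψ, hψ.mono h, hw⟩

lemma lambda1p_anti (hp : 1 ≤ p) (h : A ⊆ B) : lambda1p N p hp B ≤ lambda1p N p hp A :=
  sInf_le_sInf fun _ ⟨w, hw, ht⟩ => ⟨w, W10_mono hp h hw, ht⟩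

lemma lambda1p_eq_iInf (hp : 1 ≤ p) (Ω : Set (EucN N)) :
    lambda1p N p hp Ω = ⨅ w ∈ W10 N p hp Ω, ⨅ _ : ‖w.1‖ₑ = 1, ‖w.2‖ₑ ^ p := by
  have hp0 : 0 < p := one_pos.trans_le hp
  have unit_iff (w : SobPair N (ENNReal.ofReal p)) : (∫ x, |w.1 x| ^ p) = 1 ↔ ‖w.1‖ₑ = 1 := by
    rw [← ENNReal.ofReal_eq_one]
    simp only [← Real.norm_eq_abs]
    rw [ofReal_integral_norm_rpow hp0]
    exact (ENNReal.rpow_left_injective hp0.ne').eq_iff' (ENNReal.one_rpow p)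
  refine le_antisymm (le_iInf₂ fun w hw => le_iInf fun hw1 => ?_) (le_sInf ?_)
  · exact sInf_le ⟨w, hw, (unit_iff w).2 hw1, (ofReal_integral_norm_rpow hp0 w.2).symm⟩
  · rintro _ ⟨w, hw, hw1, rfl⟩
    rw [ofReal_integral_norm_rpow hp0]
    exact iInf₂_le_of_le w hw (iInf_le _ ((unit_iff w).1 hw1))

lemma smul_mem_W10 (hp : 1 ≤ p) {w : SobPair N (ENNReal.ofReal p)} (hw : w ∈ W10 N p hp Ω)
    (a : ℝ) : a • w ∈ W10 N p hp Ω := by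
  let _ := fact_one_le_ofReal hp
  refine map_mem_closure (continuous_const_smul a) hw ?_
  rintro w ⟨ψ, hψ, hw₁, hw₂⟩
  refine ⟨a • ψ, hψ.const_smul a, ?_, ?_⟩
  · filter_upwards [Lp.coeFn_smul a w.1, hw₁] with x hx hx₁
    simp [hx, hx₁]
  · filter_upwards [Lp.coeFn_smul a w.2, hw₂] with x hx hx₂
    simp [hx, hx₂, gradient, fderiv_const_smul (hψ.contDiff_one.differentiable one_ne_zero x)]

lemma toLp_mem_W10 (hp : 1 ≤ p) {ψ : EucN N → ℝ} (hψ : IsTestFun Ω ψ) :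
    ((hψ.memLp _).toLp, (hψ.memLp_gradient _).toLp) ∈ W10 N p hp Ω := by
  let _ := fact_one_le_ofReal hp
  exact subset_closure ⟨ψ, hψ, (hψ.memLp _).coeFn_toLp, (hψ.memLp_gradient _).coeFn_toLp⟩

lemma lambda1p_rpow_inv_mul_enorm_le (hp : 1 ≤ p) {w : SobPair N (ENNReal.ofReal p)}
    (hw : w ∈ W10 N p hp Ω) : lambda1p N p hp Ω ^ p⁻¹ * ‖w.1‖ₑ ≤ ‖w.2‖ₑ := by
  let _ := fact_one_le_ofReal hp
  have hp0 : 0 < p := one_pos.trans_le hp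
  rcases eq_or_ne w.1 0 with hw0 | hw0
  · simp [hw0]
  have norm_inv : ‖‖w.1‖⁻¹‖ₑ = ‖w.1‖ₑ⁻¹ := by
    rw [enorm_inv (norm_ne_zero_iff.2 hw0), enorm_norm]
  have hle : lambda1p N p hp Ω ≤ (‖w.1‖ₑ⁻¹ * ‖w.2‖ₑ) ^ p := by
    rw [lambda1p_eq_iInf, ← norm_inv, ← enorm_smul]
    refine iInf₂_le_of_le _ (smul_mem_W10 hp hw ‖w.1‖⁻¹) (iInf_le _ ?_)
    rw [Prod.smul_fst, enorm_smul, norm_inv,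
      ENNReal.inv_mul_cancel (enorm_ne_zero.2 hw0) enorm_ne_top]
  rw [← ENNReal.rpow_inv_le_iff hp0, ← ENNReal.div_eq_inv_mul] at hle
  exact ENNReal.mul_le_of_le_div hle

lemma inv_rpow_le_lambda1p (hp : 1 ≤ p) {C : ℝ≥0∞} (hC : C ≠ ∞)
    (h : HasPoincareConst (ENNReal.ofReal p) Ω C) : C⁻¹ ^ p ≤ lambda1p N p hp Ω := by
  let _ := fact_one_le_ofReal hp
  have poincare : W10 N p hp Ω ⊆ {w | ‖w.1‖ₑ ≤ C * ‖w.2‖ₑ} := by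
    refine closure_minimal ?_ (isClosed_le (by fun_prop)
      ((ENNReal.continuous_const_mul hC).comp (by fun_prop)))
    rintro w ⟨ψ, hψ, hw₁, hw₂⟩
    change ‖w.1‖ₑ ≤ C * ‖w.2‖ₑ
    rw [Lp.enorm_def, Lp.enorm_def, eLpNorm_congr_ae hw₁, eLpNorm_congr_ae hw₂, eLpNorm_gradient]
    exact h ψ hψ
  rw [lambda1p_eq_iInf]
  refine le_iInf₂ fun w hw => le_iInf fun hw1 => ?_
  gcongr
  have : 1 ≤ C * ‖w.2‖ₑ := hw1 ▸ poincare hw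
  exact (ENNReal.inv_le_iff_le_mul (fun h => (enorm_ne_top h).elim) (fun h => (hC h).elim)).2 this

lemma lambda1p_pos_iff (hp : 1 ≤ p) :
    0 < lambda1p N p hp Ω ↔ ∃ C ≠ ∞, HasPoincareConst (ENNReal.ofReal p) Ω C := by
  have hp0 : 0 < p := one_pos.trans_le hp
  refine ⟨fun h => ?_, fun ⟨C, hC, h⟩ => ?_⟩
  · have hpos : lambda1p N p hp Ω ^ p⁻¹ ≠ 0 := by
      simp [h.ne', ENNReal.rpow_eq_zero_iff, hp0.not_gt]
    refine ⟨(lambda1p N p hp Ω ^ p⁻¹)⁻¹, ENNReal.inv_ne_top.2 hpos, fun ψ hψ => ?_⟩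
    have := lambda1p_rpow_inv_mul_enorm_le hp (toLp_mem_W10 hp hψ)
    rw [Lp.enorm_toLp, Lp.enorm_toLp, eLpNorm_gradient] at this
    rw [← ENNReal.div_eq_inv_mul, ENNReal.le_div_iff_mul_le (.inl hpos)
      (.inr (by rw [← eLpNorm_gradient]; exact (hψ.memLp_gradient _).eLpNorm_ne_top)), mul_comm]
    exact this
  · exact (ENNReal.rpow_pos_of_nonneg (ENNReal.inv_pos.2 hC) hp0.le).trans_le
      (inv_rpow_le_lambda1p hp hC h)

lemma lambda1p_empty (hp : 1 ≤ p) : lambda1p N p hp ∅ = ∞ := by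
  have := inv_rpow_le_lambda1p hp ENNReal.zero_ne_top (hasPoincareConst_empty (N := N) _ 0)
  simpa [ENNReal.top_rpow_of_pos (one_pos.trans_le hp)] using this

lemma lambda1p_pos_of_sdiff [Nontrivial (EucN N)] (hp : 1 ≤ p) {s : Set (EucN N)}
    (hs : Bornology.IsBounded s) (h : 0 < lambda1p N p hp (Ω \ s)) : 0 < lambda1p N p hp Ω := by
  obtain ⟨C, hC, hpoincare⟩ := (lambda1p_pos_iff hp).1 h
  exact (lambda1p_pos_iff hp).2
    (exists_hasPoincareConst_of_sdiff hs (one_le_ofReal.2 hp) ofReal_ne_top hC hpoincare)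

lemma lambda1p_le_Einfty (hp : 1 ≤ p) : lambda1p N p hp Ω ≤ Einfty N p hp Ω :=
  (lambda1p_anti hp sdiff_subset).trans (le_iSup₂_of_le (1 : ℝ) (mem_Ioi.2 one_pos) le_rfl)

lemma Einfty_eq_top_of_isBounded (hp : 1 ≤ p) (hΩ : Bornology.IsBounded Ω) :
    Einfty N p hp Ω = ∞ := by
  obtain ⟨R, hR, hΩR⟩ := hΩ.subset_ball_lt 0 0
  have hempty : Ω \ closure (ball 0 R) = ∅ := sdiff_eq_empty.2 (hΩR.trans subset_closure)
  refine top_le_iff.1 (le_iSup₂_of_le R hR ?_)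
  rw [hempty, lambda1p_empty]

lemma ne_zero_of_Einfty_ne_top (hp : 1 ≤ p) (hE : Einfty N p hp Ω ≠ ∞) : N ≠ 0 := by
  rintro rfl
  exact hE (Einfty_eq_top_of_isBounded hp Ω.toFinite.isBounded)

end FirstEigenvalue

theorem statement7_general {N : ℕ} (hN : N ≠ 0) {p : ℝ} (hp : 1 ≤ p) (Ω : Set (EucN N)) :
    0 < lambda1p N p hp Ω ↔ 0 < Einfty N p hp Ω := by
  have : NeZero N := ⟨hN⟩
  refine ⟨fun h => h.trans_le (lambda1p_le_Einfty hp), fun h => ?_⟩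
  obtain ⟨R, -, hR⟩ : ∃ R > 0, 0 < lambda1p N p hp (Ω \ closure (ball 0 R)) := by
    simpa [Einfty, lt_iSup_iff] using h
  exact lambda1p_pos_of_sdiff hp isBounded_ball.closure hR

theorem statement7 (N : ℕ) (p : ℝ) (hp1 : 1 < p) (Ω : Set (EucN N)) (hΩ : IsOpen Ω)
    (hE : Einfty N p hp1.le Ω ≠ ⊤) :
    0 < lambda1p N p hp1.le Ω ↔ 0 < Einfty N p hp1.le Ω :=
  statement7_general (ne_zero_of_Einfty_ne_top hp1.le hE) hp1.le Ω

end
end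

section
/- Let 1<p<∞ and let Ω ⊆ ℝ^N be an open set with λ_{1,p}(Ω) > 0. Let X(Ω) be a Banach space such that C_c^∞(Ω) ⊆ X(Ω) and X(Ω) ⊆ W^{1,p}_0(Ω) with continuous inclusion, i.e. there is C > 0 with ‖∇φ‖_{L^p(Ω)} ≤ C ‖φ‖_{X(Ω)} for every φ ∈ X(Ω). Set X_{k,p}(Ω) := {K ⊆ S_p(Ω) ∩ X(Ω) : K symmetric and compact in the norm topology of X(Ω), γ(K;X(Ω)) ≥ k}. Then for every K ∈ W_{k,p}(Ω) and every δ > 0 there exists K_δ ∈ X_{k,p}(Ω) such that max_{φ ∈ K_δ} ∫_Ω |∇φ|^p dx ≤ max_{φ ∈ K} ∫_Ω |∇φ|^p dx + δ. -/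
open MeasureTheory Filter Topology Metric Set ENNReal
open scoped RealInnerProductSpace

noncomputable section

/-!
A linear map `ι` admits continuous odd approximate right inverses `Q` on the closure of its range:
the conditions "`x` maps `ε`-close to `w`" are convex in `x` and locally constant in `w`, so they
can be glued by a partition of unity, and taking the odd part `(P w - P (-w)) / 2` of the resulting
map `P` preserves closeness. Applied to the inclusion `X(Ω) → W^{1,p}_0(Ω)`, whose range is dense
because it contains the test functions, `Q` moves the compact set `K` into `X(Ω)` with a small
displacement in `W^{1,p}_0(Ω)`. Dividing by the `L^p` norm puts the image back on `S_p(Ω)`, and by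
compactness of `K` the Dirichlet energy stays below `max_K + δ`; an odd continuous map cannot lower
the genus.
-/

section Genus

variable {Y Z : Type*} [NormedAddCommGroup Y] [NormedAddCommGroup Z]

theorem HasOddMapToSphere.of_image {A : Set Y} {f : Y → Z} {j : ℕ}
    (h : HasOddMapToSphere (f '' A) j) (hf : ContinuousOn f A) (hodd : ∀ y ∈ A, f (-y) = -f y) :
    HasOddMapToSphere A j := by
  obtain ⟨g, hg, hg_norm, hg_odd⟩ := h
  refine ⟨g ∘ f, hg.comp hf (mapsTo_image f A), fun y hy => hg_norm _ (mem_image_of_mem f hy),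
    fun y hy => ?_⟩
  rw [Function.comp_apply, hodd y hy, hg_odd _ (mem_image_of_mem f hy), Function.comp_apply]

theorem genusGE.image {A : Set Y} {f : Y → Z} {k : ℕ} (hA : genusGE A k)
    (hf : ContinuousOn f A) (hodd : ∀ y ∈ A, f (-y) = -f y) : genusGE (f '' A) k :=
  fun j hj => hA j (hj.of_image hf hodd)

end Genus

section ApproximateRightInverse

variable {E X : Type*} [SeminormedAddCommGroup E] [NormedSpace ℝ E]
  [AddCommGroup X] [Module ℝ X] [TopologicalSpace X] [IsTopologicalAddGroup X]
  [ContinuousSMul ℝ X]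

theorem exists_continuous_approx_rightInverse (ι : X →ₗ[ℝ] E) {ε : ℝ} (hε : 0 < ε) :
    ∃ P : E → X, Continuous P ∧ Continuous (ι ∘ P) ∧
      ∀ w ∈ closure (range ι), ι (P w) ∈ ball w ε := by
  -- Selecting in the graph of `ι` makes `ι ∘ P` continuous although `ι` itself need not be.
  let t : E → Set (X × E) := fun w =>
    ι.graph ∩ ⋂ _ : w ∈ closure (range ι), Prod.snd ⁻¹' ball w ε
  have ht_convex : ∀ w, Convex ℝ (t w) := fun w =>
    ι.graph.convex.inter <| convex_iInter fun _ =>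
      (convex_ball w ε).linear_preimage (LinearMap.snd ℝ X E)
  have ht_local : ∀ w, ∃ z, ∀ᶠ v in 𝓝 w, z ∈ t v := fun w => by
    by_cases hw : w ∈ closure (range ι)
    · obtain ⟨_, ⟨x, rfl⟩, hx⟩ := Metric.mem_closure_iff.1 hw ε hε
      refine ⟨(x, ι x), ?_⟩
      filter_upwards [isOpen_ball.mem_nhds (mem_ball.2 hx)] with v hv
      exact ⟨(ι.mem_graph_iff _).2 rfl, mem_iInter.2 fun _ => mem_ball_comm.1 hv⟩
    · refine ⟨0, ?_⟩
      filter_upwards [isClosed_closure.isOpen_compl.mem_nhds hw] with v hv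
      exact ⟨ι.graph.zero_mem, mem_iInter.2 fun hv' => absurd hv' hv⟩
  obtain ⟨g, hg⟩ := exists_continuous_forall_mem_convex_of_local_const ht_convex ht_local
  have hι_fst : ∀ w, ι (g w).1 = (g w).2 := fun w => ((ι.mem_graph_iff _).1 (hg w).1).symm
  refine ⟨fun w => (g w).1, continuous_fst.comp g.continuous, ?_, fun w hw => ?_⟩
  · exact (continuous_snd.comp g.continuous).congr fun w => (hι_fst w).symm
  · rw [hι_fst]
    exact mem_iInter.1 (hg w).2 hw

theorem exists_continuous_odd_approx_rightInverse (ι : X →ₗ[ℝ] E) {ε : ℝ} (hε : 0 < ε) :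
    ∃ Q : E → X, Continuous Q ∧ Continuous (ι ∘ Q) ∧ Q.Odd ∧
      ∀ w ∈ closure (range ι), ι (Q w) ∈ ball w ε := by
  obtain ⟨P, hP, hιP, hP_near⟩ := exists_continuous_approx_rightInverse ι hε
  let Q : E → X := fun w => (2⁻¹ : ℝ) • (P w - P (-w))
  have hιQ : ∀ w, ι (Q w) = midpoint ℝ (ι (P w)) (-ι (P (-w))) := fun w => by
    simp only [Q, map_smul, map_sub, midpoint_eq_smul_add, invOf_eq_inv, ← sub_eq_add_neg]
  refine ⟨Q, (hP.sub (hP.comp continuous_neg)).const_smul _, ?_, fun w => ?_, fun w hw => ?_⟩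
  · refine ((hιP.sub (hιP.comp continuous_neg)).const_smul (2⁻¹ : ℝ)).congr fun w => ?_
    simp only [Q, Pi.smul_apply, Pi.sub_apply, Function.comp_apply, map_smul, map_sub]
  · simp only [Q, neg_neg, ← smul_neg, neg_sub]
  · have hw_neg : -w ∈ closure (range ι) :=
      (LinearMap.range ι).topologicalClosure.neg_mem hw
    rw [hιQ]
    refine (convex_ball w ε).midpoint_mem (hP_near w hw) ?_
    simpa only [mem_ball, dist_neg] using hP_near (-w) hw_neg

end ApproximateRightInverse

theorem eventually_nhdsSet_inv_smul_mem {E : Type*} [AddCommGroup E] [Module ℝ E]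
    [TopologicalSpace E] [ContinuousSMul ℝ E] {ν : Seminorm ℝ E} (hν : Continuous ν) {K U : Set E}
    (hK_one : ∀ w ∈ K, ν w = 1) (hU : U ∈ 𝓝ˢ K) :
    ∀ᶠ z in 𝓝ˢ K, ν z ≠ 0 ∧ (ν z)⁻¹ • z ∈ U := by
  refine eventually_nhdsSet_iff_forall.2 fun w hw => ?_
  have hw_ne : ν w ≠ 0 := (hK_one w hw).trans_ne one_ne_zero
  have h_tendsto : Tendsto (fun z => (ν z)⁻¹ • z) (𝓝 w) (𝓝 w) := by
    simpa only [hK_one w hw, inv_one, one_smul, id_eq] using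
      ((hν.tendsto w).inv₀ hw_ne).smul tendsto_id
  exact (hν.continuousAt.eventually_ne hw_ne).and
    (h_tendsto.eventually (mem_nhdsSet_iff_forall.1 hU w hw))

theorem exists_isCompact_genusGE_mapsTo {E X : Type*}
    [NormedAddCommGroup E] [NormedSpace ℝ E] [NormedAddCommGroup X] [NormedSpace ℝ X]
    (ι : X →ₗ[ℝ] E) {ν : Seminorm ℝ E} (hν : Continuous ν) {K U : Set E} {k : ℕ}
    (hK_range : K ⊆ closure (range ι)) (hK_one : ∀ w ∈ K, ν w = 1) (hK_neg : ∀ w ∈ K, -w ∈ K)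
    (hK_compact : IsCompact K) (hK_genus : genusGE K k) (hU : U ∈ 𝓝ˢ K) :
    ∃ L : Set X, (∀ x ∈ L, ν (ι x) = 1) ∧ (∀ x ∈ L, -x ∈ L) ∧ IsCompact L ∧ genusGE L k ∧
      MapsTo ι L U := by
  obtain ⟨ε, hε, h_thickening⟩ := (hasBasis_nhdsSet_thickening hK_compact).mem_iff.1
    (eventually_nhdsSet_inv_smul_mem hν hK_one hU)
  obtain ⟨Q, hQ, hιQ, hQ_odd, hQ_near⟩ := exists_continuous_odd_approx_rightInverse ι hε
  have hQ_normalize : ∀ w ∈ K, ν (ι (Q w)) ≠ 0 ∧ (ν (ι (Q w)))⁻¹ • ι (Q w) ∈ U := fun w hw =>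
    h_thickening (mem_thickening_iff.2 ⟨w, hw, hQ_near w (hK_range hw)⟩)
  let R : E → X := fun w => (ν (ι (Q w)))⁻¹ • Q w
  have hR : ContinuousOn R K :=
    ((hν.comp hιQ).continuousOn.inv₀ fun w hw => (hQ_normalize w hw).1).smul hQ.continuousOn
  have hR_odd : R.Odd := fun w => by simp only [R, hQ_odd w, map_neg, map_neg_eq_map, smul_neg]
  refine ⟨R '' K, forall_mem_image.2 fun w hw => ?_,
    forall_mem_image.2 fun w hw => ⟨-w, hK_neg w hw, hR_odd w⟩,
    hK_compact.image_of_continuousOn hR, hK_genus.image hR fun w _ => hR_odd w,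
    forall_mem_image.2 fun w hw => ?_⟩
  · rw [map_smul, map_smul_eq_mul, norm_inv, Real.norm_of_nonneg (apply_nonneg ν _),
      inv_mul_cancel₀ (hQ_normalize w hw).1]
  · simpa only [R, map_smul] using (hQ_normalize w hw).2

theorem setOf_lt_biSup_add_mem_nhdsSet {E : Type*} [TopologicalSpace E] {Φ : E → ℝ≥0∞}
    (hΦ : Continuous Φ) {K : Set E} (hK : ∀ w ∈ K, Φ w ≠ ∞) {δ : ℝ≥0∞} (hδ : δ ≠ 0) :
    {z | Φ z < (⨆ w ∈ K, Φ w) + δ} ∈ 𝓝ˢ K :=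
  mem_nhdsSet_iff_forall.2 fun w hw => hΦ.continuousAt.eventually_lt_const <|
    (ENNReal.lt_add_right (hK w hw) hδ).trans_le (add_le_add_left (le_biSup Φ hw) δ)

section LpNorm

variable {α F : Type*} {mα : MeasurableSpace α} {μ : Measure α} [NormedAddCommGroup F] {p : ℝ}

theorem integral_norm_rpow_coe_Lp (hp : 0 < p) (f : Lp F (ENNReal.ofReal p) μ) :
    ∫ x, ‖f x‖ ^ p ∂μ = ‖f‖ ^ p := by
  have h_nonneg : 0 ≤ ∫ x, ‖f x‖ ^ p ∂μ :=
    integral_nonneg fun x => Real.rpow_nonneg (norm_nonneg _) _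
  have h_norm : ‖f‖ = (∫ x, ‖f x‖ ^ p ∂μ) ^ p⁻¹ := by
    rw [Lp.norm_def, (Lp.memLp f).eLpNorm_eq_integral_rpow_norm
      (ENNReal.ofReal_pos.2 hp).ne' ENNReal.ofReal_ne_top, ENNReal.toReal_ofReal hp.le,
      ENNReal.toReal_ofReal (Real.rpow_nonneg h_nonneg _)]
  rw [h_norm, Real.rpow_inv_rpow h_nonneg hp.ne']

theorem integral_norm_rpow_coe_Lp_eq_one_iff (hp : 0 < p) (f : Lp F (ENNReal.ofReal p) μ) :
    ∫ x, ‖f x‖ ^ p ∂μ = 1 ↔ ‖f‖ = 1 := by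
  have h_nonneg : 0 ≤ ‖f‖ := ENNReal.toReal_nonneg
  rw [integral_norm_rpow_coe_Lp hp, ← Real.rpow_left_inj h_nonneg zero_le_one hp.ne',
    Real.one_rpow]

end LpNorm

theorem statement13_general {N : ℕ} {p : ℝ} (hp : 1 ≤ p) {Ω : Set (EucN N)}
    {X : Type*} [NormedAddCommGroup X] [NormedSpace ℝ X]
    (ι : X →ₗ[ℝ] SobPair N (ENNReal.ofReal p))
    (htest : ∀ w : SobPair N (ENNReal.ofReal p), IsTestPair (ENNReal.ofReal p) Ω w →
      ∃ x : X, ι x = w)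
    {k : ℕ} {K : Set (SobPair N (ENNReal.ofReal p))} (hK : K ∈ SobClass N p hp Ω k)
    {δ : ℝ} (hδ : 0 < δ) :
    ∃ Kd : Set X,
      ((∀ x ∈ Kd, (∫ y, |(ι x).1 y| ^ p) = 1) ∧ (∀ x ∈ Kd, -x ∈ Kd) ∧
        IsCompact Kd ∧ genusGE Kd k) ∧
      (⨆ x ∈ Kd, ENNReal.ofReal (∫ y, ‖(ι x).2 y‖ ^ p)) ≤
        (⨆ w ∈ K, ENNReal.ofReal (∫ y, ‖w.2 y‖ ^ p)) + ENNReal.ofReal δ := by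
  have := fact_one_le_ofReal hp
  have hp_pos : 0 < p := one_pos.trans_le hp
  obtain ⟨hK_W10, hK_one, hK_neg, hK_compact, hK_genus⟩ := hK
  let ν : Seminorm ℝ (SobPair N (ENNReal.ofReal p)) :=
    (normSeminorm ℝ _).comp (LinearMap.fst ℝ _ _)
  have h_energy : Continuous fun w : SobPair N (ENNReal.ofReal p) =>
      ENNReal.ofReal (∫ y, ‖w.2 y‖ ^ p) := by
    simp only [integral_norm_rpow_coe_Lp hp_pos]
    exact ENNReal.continuous_ofReal.comp (continuous_snd.norm.rpow_const fun _ => .inr hp_pos.le)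
  obtain ⟨Kd, hKd_one, hKd_neg, hKd_compact, hKd_genus, hKd_energy⟩ :=
    exists_isCompact_genusGE_mapsTo ι (ν := ν) continuous_fst.norm
      (hK_W10.trans (closure_mono htest))
      (fun w hw => (integral_norm_rpow_coe_Lp_eq_one_iff hp_pos w.1).1 (hK_one w hw))
      hK_neg hK_compact hK_genus
      (setOf_lt_biSup_add_mem_nhdsSet h_energy (fun _ _ => ENNReal.ofReal_ne_top)
        (ENNReal.ofReal_pos.2 hδ).ne')
  exact ⟨Kd, ⟨fun x hx => (integral_norm_rpow_coe_Lp_eq_one_iff hp_pos _).2 (hKd_one x hx),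
    hKd_neg, hKd_compact, hKd_genus⟩, iSup₂_le fun x hx => (hKd_energy hx).le⟩

theorem statement13 (N : ℕ) (p : ℝ) (hp1 : 1 < p) (Ω : Set (EucN N)) (hΩ : IsOpen Ω)
    (hl : 0 < lambda1p N p hp1.le Ω)
    (X : Type) [NormedAddCommGroup X] [NormedSpace ℝ X] [CompleteSpace X]
    (ι : X →ₗ[ℝ] SobPair N (ENNReal.ofReal p)) (hinj : Function.Injective ι)
    (hrange : ∀ x : X, ι x ∈ W10 N p hp1.le Ω)
    (htest : ∀ w : SobPair N (ENNReal.ofReal p), IsTestPair (ENNReal.ofReal p) Ω w →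
      ∃ x : X, ι x = w)
    (C : ℝ) (hC : 0 < C) (hcont : ∀ x : X, (∫ y, ‖(ι x).2 y‖ ^ p) ^ (1/p) ≤ C * ‖x‖)
    (k : ℕ) (K : Set (SobPair N (ENNReal.ofReal p))) (hK : K ∈ SobClass N p hp1.le Ω k)
    (δ : ℝ) (hδ : 0 < δ) :
    ∃ Kd : Set X,
      ((∀ x ∈ Kd, (∫ y, |(ι x).1 y| ^ p) = 1) ∧ (∀ x ∈ Kd, -x ∈ Kd) ∧
        IsCompact Kd ∧ genusGE Kd k) ∧
      (⨆ x ∈ Kd, ENNReal.ofReal (∫ y, ‖(ι x).2 y‖ ^ p)) ≤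
        (⨆ w ∈ K, ENNReal.ofReal (∫ y, ‖w.2 y‖ ^ p)) + ENNReal.ofReal δ :=
  statement13_general hp1.le ι htest hK hδ

end
end
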